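/- Suppose Ideal(c_eq)+QM(c_in) is archimedean and Assumption A holds. If the LICQC, SCC and SOSC hold at every global minimizer of the problem (Q): minimize f_{θ*}(x) := f(x) − Σ_i θ*_i a_i(x) subject to x ∈ K, then there exists k1 ∈ ℕ such that for every k ≥ k1, every minimizer w of the kth moment relaxation has a flat truncation. -/

import Mathlib

open MvPolynomial MeasureTheory

noncomputable section

/-- The space of real polynomials in `n` variables. -/
abbrev RPoly (n : ℕ) : Type := MvPolynomial (Fin n) ℝ

/-- The degree `|α|` of a monomial power `α`. -/
def mdeg {n : ℕ} (α : Fin n →₀ ℕ) : ℕ := ∑ i, α i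

/-- `p` is a sum of squares of polynomials. -/
def IsSOS {n : ℕ} (p : RPoly n) : Prop :=
  ∃ L : List (RPoly n), p = (L.map (fun q => q ^ 2)).sum

/-- The truncation `QM(g)_k` of the quadratic module generated by `(g j)_{j ∈ S}`. -/
def QModDeg {n : ℕ} {κ : Type} (S : Finset κ) (g : κ → RPoly n) (k : ℕ) :
    Set (RPoly n) :=
  {p | ∃ σ0 : RPoly n, ∃ σ : κ → RPoly n,
      IsSOS σ0 ∧ σ0.totalDegree ≤ k ∧
      (∀ j ∈ S, IsSOS (σ j) ∧ (σ j).totalDegree + (g j).totalDegree ≤ k) ∧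
      p = σ0 + ∑ j ∈ S, g j * σ j}

/-- The truncation `Ideal(h)_k` of the ideal generated by `(h j)_{j ∈ S}`. -/
def IdealDeg {n : ℕ} {ι : Type} (S : Finset ι) (h : ι → RPoly n) (k : ℕ) :
    Set (RPoly n) :=
  {p | ∃ q : ι → RPoly n,
      (∀ j ∈ S, (q j).totalDegree + (h j).totalDegree ≤ k) ∧
      p = ∑ j ∈ S, h j * q j}

/-- The quadratic module `QM(g)` generated by `(g j)_{j ∈ S}`. -/
def QModFull {n : ℕ} {κ : Type} (S : Finset κ) (g : κ → RPoly n) : Set (RPoly n) :=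
  {p | ∃ σ0 : RPoly n, ∃ σ : κ → RPoly n,
      IsSOS σ0 ∧ (∀ j ∈ S, IsSOS (σ j)) ∧ p = σ0 + ∑ j ∈ S, g j * σ j}

/-- The ideal `Ideal(h)` generated by `(h j)_{j ∈ S}`. -/
def IdealFull {n : ℕ} {ι : Type} (S : Finset ι) (h : ι → RPoly n) : Set (RPoly n) :=
  (Ideal.span (h '' (S : Set ι)) : Ideal (RPoly n))

/-- `Ideal(c_eq) + QM(c_in)` is archimedean. -/
def ArchimedeanQM {n : ℕ} (E I : Finset ℕ) (c : ℕ → RPoly n) : Prop :=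
  ∃ R : ℝ, 0 < R ∧ ∃ p1 ∈ IdealFull E c, ∃ p2 ∈ QModFull I c,
    (C R : RPoly n) - ∑ i, (X i : RPoly n) ^ 2 = p1 + p2

/-- The basic closed semialgebraic set `K`. -/
def Kset {n : ℕ} (E I : Finset ℕ) (c : ℕ → RPoly n) : Set (Fin n → ℝ) :=
  {x | (∀ j ∈ E, eval x (c j) = 0) ∧ (∀ j ∈ I, 0 ≤ eval x (c j))}

/-- The bilinear pairing `⟨p, y⟩ = ∑_α p_α y_α`. -/
def pairing {n : ℕ} (p : RPoly n) (y : (Fin n →₀ ℕ) → ℝ) : ℝ :=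
  ∑ α ∈ p.support, p.coeff α * y α

/-- Membership in the moment cone `ℛ_d(K)`: the entries `y_α`, `|α| ≤ d`, are the
moments of a finite Borel measure supported in the closed set `K`. -/
def InMomentCone {n : ℕ} (d : ℕ) (K : Set (Fin n → ℝ)) (y : (Fin n →₀ ℕ) → ℝ) : Prop :=
  ∃ μ : Measure (Fin n → ℝ), IsFiniteMeasure μ ∧ μ Kᶜ = 0 ∧
    ∀ α : Fin n →₀ ℕ, mdeg α ≤ d →
      Integrable (fun x => ∏ i, x i ^ α i) μ ∧
      y α = ∫ x, (∏ i, x i ^ α i) ∂μ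

/-- The cone `P_d(K)` of polynomials of degree at most `d` that are nonnegative on `K`. -/
def PdCone {n : ℕ} (d : ℕ) (K : Set (Fin n → ℝ)) : Set (RPoly n) :=
  {p | p.totalDegree ≤ d ∧ ∀ x ∈ K, 0 ≤ eval x p}

/-- The interior of `P_d(K)` in the coefficient topology of `ℝ[x]_d`. -/
def PdInterior {n : ℕ} (d : ℕ) (K : Set (Fin n → ℝ)) : Set (RPoly n) :=
  {p | p.totalDegree ≤ d ∧ ∃ ε : ℝ, 0 < ε ∧ ∀ q : RPoly n, q.totalDegree ≤ d →
      (∀ α : Fin n →₀ ℕ, |q.coeff α - p.coeff α| ≤ ε) → ∀ x ∈ K, 0 ≤ eval x q}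

instance degLEFintype (n t : ℕ) : Fintype {α : Fin n →₀ ℕ // mdeg α ≤ t} := by
  apply Fintype.ofInjective
    (fun a : {α : Fin n →₀ ℕ // mdeg α ≤ t} =>
      (fun i => (⟨a.1 i, by
        have h1 : a.1 i ≤ mdeg a.1 :=
          Finset.single_le_sum (fun j _ => Nat.zero_le _) (Finset.mem_univ i)
        exact Nat.lt_succ_of_le (le_trans h1 a.2)⟩ : Fin (t + 1))) :
        {α : Fin n →₀ ℕ // mdeg α ≤ t} → (Fin n → Fin (t + 1)))
  intro a b hab
  apply Subtype.ext
  ext i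
  exact congrArg Fin.val (congrFun hab i)

/-- The moment matrix `M_t[w]`, indexed by monomial powers of degree at most `t`. -/
def momentMatrix {n : ℕ} (t : ℕ) (w : (Fin n →₀ ℕ) → ℝ) :
    Matrix {α : Fin n →₀ ℕ // mdeg α ≤ t} {α : Fin n →₀ ℕ // mdeg α ≤ t} ℝ :=
  fun α β => w (α.1 + β.1)

/-- `w` admits a flat truncation: for some `d0 ≤ t ≤ k`,
`rank M_{t-dK}[w] = rank M_t[w]`. -/
def HasFlatTruncation {n : ℕ} (d0 dK k : ℕ) (w : (Fin n →₀ ℕ) → ℝ) : Prop :=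
  ∃ t : ℕ, d0 ≤ t ∧ t ≤ k ∧
    (momentMatrix (t - dK) w).rank = (momentMatrix t w).rank

/-- The gradient of a polynomial at a point. -/
def gradP {n : ℕ} (p : RPoly n) (u : Fin n → ℝ) : Fin n → ℝ :=
  fun i => eval u (pderiv i p)

/-- The Hessian of a polynomial at a point. -/
def hessP {n : ℕ} (p : RPoly n) (u : Fin n → ℝ) : Fin n → Fin n → ℝ :=
  fun i j => eval u (pderiv i (pderiv j p))

/-- The classical optimality conditions (LICQC, KKT with SCC and SOSC) at the point `u`
for the problem: minimize `F` subject to `ge j = 0` (`j ∈ Es`), `gi j ≥ 0` (`j ∈ Is`). -/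
def OptCondsAt {n : ℕ} {ι κ : Type}
    (Es : Finset ι) (ge : ι → RPoly n) (Is : Finset κ) (gi : κ → RPoly n)
    (F : RPoly n) (u : Fin n → ℝ) : Prop :=
  -- LICQC: gradients of active constraints are linearly independent
  LinearIndependent ℝ
    (Sum.elim
      (fun j : {j : ι // j ∈ Es ∧ eval u (ge j) = 0} => gradP (ge j.1) u)
      (fun j : {j : κ // j ∈ Is ∧ eval u (gi j) = 0} => gradP (gi j.1) u)) ∧
  ∃ (lamE : ι → ℝ) (lamI : κ → ℝ),
    -- KKT stationarity
    (gradP F u =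
      (∑ j ∈ Es, lamE j • gradP (ge j) u) + ∑ j ∈ Is, lamI j • gradP (gi j) u) ∧
    (∀ j ∈ Is, 0 ≤ lamI j ∧ lamI j * eval u (gi j) = 0) ∧
    -- SCC
    (∀ j ∈ Is, 0 < lamI j + eval u (gi j)) ∧
    -- SOSC
    (∀ v : Fin n → ℝ, v ≠ 0 →
      (∀ j ∈ Es, (∑ i, v i * gradP (ge j) u i) = 0) →
      (∀ j ∈ Is, eval u (gi j) = 0 → (∑ i, v i * gradP (gi j) u i) = 0) →
      0 < ∑ i, ∑ i', v i *
        ((hessP F u i i' - ∑ j ∈ Es, lamE j * hessP (ge j) u i i')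
          - ∑ j ∈ Is, lamI j * hessP (gi j) u i i') * v i')

/-- The degree-`ℓ` homogenization `x_0^ℓ p(x/x_0)` of `p`; the new variable `x_0`
is the variable of index `0` in `Fin (n+1)`. -/
def homogAux {n : ℕ} (ℓ : ℕ) (p : RPoly n) : RPoly (n + 1) :=
  ∑ α ∈ p.support,
    monomial
      (Finsupp.single (0 : Fin (n + 1)) (ℓ - mdeg α) + Finsupp.mapDomain Fin.succ α)
      (p.coeff α)

/-- The homogenization `p̃` of `p`. -/
def homogenize {n : ℕ} (p : RPoly n) : RPoly (n + 1) := homogAux p.totalDegree p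

/-- The polynomial `‖x̃‖² - 1`. -/
def sphereP (n : ℕ) : RPoly (n + 1) := (∑ i, (X i : RPoly (n + 1)) ^ 2) - 1

/-- The homogenization `K̃` of the set `K`. -/
def Khom {n : ℕ} (E I : Finset ℕ) (c : ℕ → RPoly n) : Set (Fin (n + 1) → ℝ) :=
  {x | (∀ j ∈ E, eval x (homogenize (c j)) = 0) ∧
       (∀ j ∈ I, 0 ≤ eval x (homogenize (c j))) ∧
       (∑ i, (x i) ^ 2) = 1 ∧ 0 ≤ x 0}

/-- `K` is closed at infinity. -/
def ClosedAtInfinity {n : ℕ} (E I : Finset ℕ) (c : ℕ → RPoly n) : Prop :=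
  Khom E I c = closure (Khom E I c ∩ {x | 0 < x 0})

/-- The tuple `c̃_eq`: the homogenizations `c̃_j` together with `‖x̃‖² - 1`
(the latter indexed by `none`). -/
def gEqH {n : ℕ} (c : ℕ → RPoly n) : Option ℕ → RPoly (n + 1) :=
  fun o => o.elim (sphereP n) (fun j => homogenize (c j))

/-- The tuple `c̃_in`: the homogenizations `c̃_j` together with `x_0`
(the latter indexed by `none`). -/
def gInH {n : ℕ} (c : ℕ → RPoly n) : Option ℕ → RPoly (n + 1) :=
  fun o => o.elim (X 0) (fun j => homogenize (c j))

/-- The index set of a tuple extended by one extra entry (indexed by `none`). -/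
def OS (S : Finset ℕ) : Finset (Option ℕ) := insert none (S.image some)

/-- Feasibility of `θ` for the linear conic problem (P). -/
def PFeas {n m : ℕ} (m1 d : ℕ) (f : RPoly n) (a : Fin m → RPoly n)
    (K : Set (Fin n → ℝ)) (θ : Fin m → ℝ) : Prop :=
  (∀ i : Fin m, m1 ≤ (i : ℕ) → 0 ≤ θ i) ∧ (f - ∑ i, C (θ i) * a i) ∈ PdCone d K

/-- The optimal value `ϑ*` of the linear conic problem (P). -/
def PVal {n m : ℕ} (m1 d : ℕ) (f : RPoly n) (a : Fin m → RPoly n) (b : Fin m → ℝ)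
    (K : Set (Fin n → ℝ)) : ℝ :=
  sSup {v : ℝ | ∃ θ : Fin m → ℝ, PFeas m1 d f a K θ ∧ v = ∑ i, b i * θ i}

/-- Feasibility of `y` for the generalized moment problem (M). -/
def MFeas {n m : ℕ} (m1 d : ℕ) (a : Fin m → RPoly n) (b : Fin m → ℝ)
    (K : Set (Fin n → ℝ)) (y : (Fin n →₀ ℕ) → ℝ) : Prop :=
  InMomentCone d K y ∧
  (∀ i : Fin m, (i : ℕ) < m1 → pairing (a i) y = b i) ∧
  (∀ i : Fin m, m1 ≤ (i : ℕ) → b i ≤ pairing (a i) y)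

/-- The optimal value `φ*` of the generalized moment problem (M). -/
def MVal {n m : ℕ} (m1 d : ℕ) (f : RPoly n) (a : Fin m → RPoly n) (b : Fin m → ℝ)
    (K : Set (Fin n → ℝ)) : ℝ :=
  sInf {v : ℝ | ∃ y : (Fin n →₀ ℕ) → ℝ, MFeas m1 d a b K y ∧ v = pairing f y}

/-- The optimal value `ϑ_k` of the `k`th SOS relaxation of (P). -/
def SOSRelaxVal {n m : ℕ} {ι κ : Type} (m1 : ℕ) (f : RPoly n) (a : Fin m → RPoly n)
    (b : Fin m → ℝ) (Es : Finset ι) (ge : ι → RPoly n) (Is : Finset κ) (gi : κ → RPoly n)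
    (k : ℕ) : ℝ :=
  sSup {v : ℝ | ∃ θ : Fin m → ℝ, (∀ i : Fin m, m1 ≤ (i : ℕ) → 0 ≤ θ i) ∧
      (∃ p1 ∈ IdealDeg Es ge (2 * k), ∃ p2 ∈ QModDeg Is gi (2 * k),
        f - ∑ i, C (θ i) * a i = p1 + p2) ∧
      v = ∑ i, b i * θ i}

/-- The semidefinite constraints of the `k`th moment relaxation:
the localizing vectors of the equality constraints vanish, and the localizing
matrices of the inequality constraints and the moment matrix are positive
semidefinite (stated equivalently via the associated quadratic forms). -/
def MomRelaxPSD {n : ℕ} {ι κ : Type} (Es : Finset ι) (ge : ι → RPoly n)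
    (Is : Finset κ) (gi : κ → RPoly n) (k : ℕ) (w : (Fin n →₀ ℕ) → ℝ) : Prop :=
  (∀ j ∈ Es, ∀ p : RPoly n, p.totalDegree + (ge j).totalDegree ≤ 2 * k →
      pairing (ge j * p) w = 0) ∧
  (∀ j ∈ Is, ∀ p : RPoly n, p.totalDegree + ((gi j).totalDegree + 1) / 2 ≤ k →
      0 ≤ pairing (gi j * p ^ 2) w) ∧
  (∀ p : RPoly n, p.totalDegree ≤ k → 0 ≤ pairing (p ^ 2) w)

/-- Feasibility of `w` for the `k`th moment relaxation of (M). -/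
def GMomFeas {n m : ℕ} {ι κ : Type} (m1 : ℕ) (a : Fin m → RPoly n) (b : Fin m → ℝ)
    (Es : Finset ι) (ge : ι → RPoly n) (Is : Finset κ) (gi : κ → RPoly n) (k : ℕ)
    (w : (Fin n →₀ ℕ) → ℝ) : Prop :=
  (∀ i : Fin m, (i : ℕ) < m1 → pairing (a i) w = b i) ∧
  (∀ i : Fin m, m1 ≤ (i : ℕ) → b i ≤ pairing (a i) w) ∧
  MomRelaxPSD Es ge Is gi k w

/-- The optimal value `φ_k` of the `k`th moment relaxation of (M). -/
def GMomVal {n m : ℕ} {ι κ : Type} (m1 : ℕ) (f : RPoly n) (a : Fin m → RPoly n)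
    (b : Fin m → ℝ) (Es : Finset ι) (ge : ι → RPoly n) (Is : Finset κ) (gi : κ → RPoly n)
    (k : ℕ) : ℝ :=
  sInf {v : ℝ | ∃ w : (Fin n →₀ ℕ) → ℝ,
      GMomFeas m1 a b Es ge Is gi k w ∧ v = pairing f w}

/-- The optimal value `f_k^den` of the `k`th order relaxation with denominators. -/
def DenRelaxVal {n : ℕ} (E I : Finset ℕ) (c : ℕ → RPoly n) (f : RPoly n) (d k : ℕ) : ℝ :=
  sSup {γ : ℝ | ∃ p1 ∈ IdealDeg E c (2 * k + d), ∃ p2 ∈ QModDeg I c (2 * k + d),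
      (1 + ∑ i, (X i : RPoly n) ^ 2) ^ k * (f - C γ) = p1 + p2}


/-- The degree bound `d_K = max_j ⌈deg(c_j)/2⌉`. -/
def dKOrig {n : ℕ} (E I : Finset ℕ) (c : ℕ → RPoly n) : ℕ :=
  (E ∪ I).sup fun j => ((c j).totalDegree + 1) / 2

/-- The degree bound `d_0` for the GMP relaxations. -/
def d0GMP {n m : ℕ} (f : RPoly n) (a : Fin m → RPoly n) (E I : Finset ℕ)
    (c : ℕ → RPoly n) : ℕ :=
  max ((f.totalDegree + 1) / 2)
    (max (dKOrig E I c) (Finset.univ.sup fun i : Fin m => ((a i).totalDegree + 1) / 2))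

/-- The degree bound `d̃_K` for the homogenized constraining tuples. -/
def dKHom {n : ℕ} (E I : Finset ℕ) (c : ℕ → RPoly n) : ℕ :=
  max ((OS E).sup fun o => ((gEqH c o).totalDegree + 1) / 2)
      ((OS I).sup fun o => ((gInH c o).totalDegree + 1) / 2)

end

/-!
Let `M` be the quadratic module of the constraints and let `F = f - ∑ θ*_i a_i`, so that `F ≥ 0`
on `K`. At a zero `z` of `F` on `K`, the multipliers with strict complementarity and the second
order condition yield `S ∈ M` such that `F - S` is, modulo the cube of the maximal ideal at `z`, a
positive definite quadratic form. Hence the zeros of `F` on `K` form a finite set `Z`, and the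
Chinese remainder theorem together with a bump polynomial glues the local `S` into one element of
`M`; subtracting it from `F` leaves a `G` that is nondegenerate on `Z` and positive on `K \ Z`.

Let `J` be the vanishing ideal of `Z`, generated by `s_1, …, s_r`. Then `u = ∑ s_i ^ 2` is an order
unit of `J ^ 2` for the cone `M ∩ J ^ 2`, whose pure states are multiplicative over `ℝ[x]`, so
each of them lives at a single point of `K`. They are all positive on `G`, which gives
`F - ε u ∈ M` for some `ε > 0`.

Duality under the Slater condition bounds the optimal value of every relaxation by `b · θ*`, so a
minimizer `w` satisfies `⟨F, w⟩ ≤ 0`. For large orders this forces `⟨s_i ^ 2, w⟩ = 0`, and the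
Cauchy–Schwarz inequality then shows that `w` annihilates any given element of `J`. Replacing
monomials by interpolation polynomials at `Z`, of bounded degree, makes the moment matrix flat.
-/

open Filter Topology

section PositiveFunctionals

variable {V : Type*} [AddCommGroup V] [Module ℝ V] {M : PointedCone ℝ V} {u : V}

theorem exists_nonneg_functional_eq_one (hu : -u ∉ M) (habs : ∀ v, ∃ t : ℝ, t • u + v ∈ M) :
    ∃ φ : V →ₗ[ℝ] ℝ, (∀ m ∈ M, 0 ≤ φ m) ∧ φ u = 1 := by
  have hu0 : u ≠ 0 := by
    rintro rfl
    exact hu (by simp)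
  let ψ : V →ₗ.[ℝ] ℝ := LinearPMap.mkSpanSingleton u 1 hu0
  have hψu : ∀ t : ℝ, ∀ ht : t • u ∈ ψ.domain, ψ ⟨t • u, ht⟩ = t := fun t ht =>
    (LinearPMap.mkSpanSingleton'_apply (σ := RingHom.id ℝ) u (1 : ℝ) _ t ht).trans (mul_one t)
  have hψ : ∀ x : ψ.domain, (x : V) ∈ M → 0 ≤ ψ x := by
    rintro ⟨x, hx⟩ hxM
    obtain ⟨t, rfl⟩ := Submodule.mem_span_singleton.1 hx
    rw [hψu]
    by_contra! ht
    refine hu ?_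
    have := M.smul_mem (r := (-t)⁻¹) (by simpa using ht.le) hxM
    rwa [smul_smul, inv_neg, neg_mul, inv_mul_cancel₀ ht.ne, neg_one_smul] at this
  obtain ⟨φ, hφψ, hφ⟩ := riesz_extension M ψ hψ fun v =>
    (habs v).imp' (fun t => ⟨t • u, Submodule.mem_span_singleton.2 ⟨t, rfl⟩⟩) fun _ ht => ht
  refine ⟨φ, hφ, ?_⟩
  have hu1 : (1 : ℝ) • u ∈ ψ.domain := Submodule.mem_span_singleton.2 ⟨1, rfl⟩
  simpa using (hφψ ⟨(1 : ℝ) • u, hu1⟩).trans (hψu 1 hu1)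

/-- `u` is an order unit of `V` for the preorder whose positive cone is `M`. -/
def IsOrderUnitFor (M : PointedCone ℝ V) (u : V) : Prop :=
  u ∈ M ∧ ∀ v, ∃ N : ℝ, N • u - v ∈ M

/-- The states of the cone `M` normalized at `u`. -/
def coneStates (M : PointedCone ℝ V) (u : V) : Set (V →ₗ[ℝ] ℝ) :=
  {φ | (∀ m ∈ M, 0 ≤ φ m) ∧ φ u = 1}

theorem isCompact_coe_image_coneStates (hu : IsOrderUnitFor M u) :
    IsCompact ((fun φ : V →ₗ[ℝ] ℝ => (φ : V → ℝ)) '' coneStates M u) := by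
  choose N hN using hu.2
  refine (isCompact_univ_pi fun v => isCompact_Icc (a := -N (-v)) (b := N v)).of_isClosed_subset
    ?_ ?_
  · have heq : (fun φ : V →ₗ[ℝ] ℝ => (φ : V → ℝ)) '' coneStates M u =
        Set.range ((↑) : (V →ₗ[ℝ] ℝ) → V → ℝ) ∩
          ((⋂ m ∈ M, {L | 0 ≤ L m}) ∩ {L | L u = 1}) := by
      ext L
      simp only [coneStates, Set.mem_image, Set.mem_inter_iff, Set.mem_range, Set.mem_iInter,
        Set.mem_ofPred_eq]
      constructor
      · rintro ⟨φ, hφ, rfl⟩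
        exact ⟨⟨φ, rfl⟩, hφ⟩
      · rintro ⟨⟨φ, rfl⟩, hφ⟩
        exact ⟨φ, hφ, rfl⟩
    rw [heq]
    exact (LinearMap.isClosed_range_coe V ℝ (RingHom.id ℝ)).inter <|
      (isClosed_biInter fun m _ => isClosed_le continuous_const (continuous_apply m)).inter <|
        isClosed_eq (continuous_apply u) continuous_const
  · rintro _ ⟨φ, hφ, rfl⟩ v -
    have hv := hφ.1 _ (hN v)
    have hnv := hφ.1 _ (hN (-v))
    simp only [map_sub, map_neg, map_smul, hφ.2, smul_eq_mul, mul_one] at hv hnv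
    constructor <;> linarith

theorem exists_extreme_coneState_le (hu : IsOrderUnitFor M u) {φ : V →ₗ[ℝ] ℝ}
    (hφ : φ ∈ coneStates M u) (g : V) :
    ∃ L ∈ (coneStates M u).extremePoints ℝ, L g ≤ φ g := by
  let S : Set (V → ℝ) := (fun φ : V →ₗ[ℝ] ℝ => (φ : V → ℝ)) '' coneStates M u
  let ev : StrongDual ℝ (V → ℝ) := -ContinuousLinearMap.proj (R := ℝ) (φ := fun _ : V => ℝ) g
  have hScomp : IsCompact S := isCompact_coe_image_coneStates hu
  have hexp : IsExposed ℝ S (ev.toExposed S) := ContinuousLinearMap.toExposed.isExposed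
  have hφS : ⇑φ ∈ S := ⟨φ, hφ, rfl⟩
  obtain ⟨L₁, hL₁, hL₁max⟩ := hScomp.exists_isMaxOn ⟨_, hφS⟩ ev.continuous.continuousOn
  obtain ⟨L₀, hL₀⟩ := (hexp.isCompact hScomp).extremePoints_nonempty ⟨L₁, hL₁, fun _ h => hL₁max h⟩
  have hL₀φ : L₀ g ≤ φ g := by simpa [ev] using hL₀.1.2 _ hφS
  have hL₀S := hexp.isExtreme.extremePoints_subset_extremePoints hL₀
  obtain ⟨L, hL, rfl⟩ := hL₀S.1
  refine ⟨L, ⟨hL, fun φ₁ h₁ φ₂ h₂ ⟨a, b, ha, hb, hab, hsum⟩ => ?_⟩, hL₀φ⟩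
  exact DFunLike.coe_injective <|
    hL₀S.2 ⟨φ₁, h₁, rfl⟩ ⟨φ₂, h₂, rfl⟩ ⟨a, b, ha, hb, hab, congrArg (⇑) hsum⟩

theorem sub_smul_mem_of_forall_extreme_pos (hu : IsOrderUnitFor M u) {g : V}
    (hg : ∀ L ∈ (coneStates M u).extremePoints ℝ, 0 < L g) :
    ∃ ε : ℝ, 0 < ε ∧ g - ε • u ∈ M := by
  by_contra! hcon
  let P : PointedCone ℝ V := M ⊔ PointedCone.hull ℝ {-g}
  have hMP : M ≤ P := le_sup_left
  have huP : -u ∉ P := by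
    intro hP
    obtain ⟨m, hm, y, hy, hmy⟩ := Submodule.mem_sup.1 hP
    obtain ⟨⟨t, ht⟩, rfl⟩ := Submodule.mem_span_singleton.1 hy
    have hmt : m = t • g - u := by
      have hmy' : m + t • -g = -u := hmy
      rw [sub_eq_add_neg, ← hmy']
      module
    rcases ht.lt_or_eq with htpos | rfl
    · refine hcon t⁻¹ (inv_pos.2 htpos) ?_
      have := M.smul_mem (inv_nonneg.2 ht) hm
      rwa [hmt, smul_sub, smul_smul, inv_mul_cancel₀ htpos.ne', one_smul] at this
    · obtain ⟨N, hN⟩ := hu.2 (-g)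
      rw [zero_smul, zero_sub] at hmt
      have hline : |N + 1| • m + (|N + 1| - (N + 1)) • u ∈ M := M.add_mem
        (M.smul_mem (abs_nonneg _) hm) (M.smul_mem (sub_nonneg.2 (le_abs_self _)) hu.1)
      refine hcon 1 one_pos ?_
      convert M.add_mem hN hline using 1
      rw [hmt]
      module
  obtain ⟨φ, hφM, hφu⟩ := exists_nonneg_functional_eq_one huP fun v => by
    obtain ⟨N, hN⟩ := hu.2 (-v)
    exact ⟨N, hMP (by simpa using hN)⟩
  have hφg : φ g ≤ 0 := by
    have := hφM (-g) (Submodule.mem_sup_right (Submodule.mem_span_singleton_self _))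
    simpa using this
  obtain ⟨L, hL, hLg⟩ := exists_extreme_coneState_le hu ⟨fun m hm => hφM m (hMP hm), hφu⟩ g
  exact (hg L hL).not_ge (hLg.trans hφg)

theorem eq_zero_of_nonneg_of_orderUnit_eq_zero (hu : IsOrderUnitFor M u) {φ : V →ₗ[ℝ] ℝ}
    (hφ : ∀ m ∈ M, 0 ≤ φ m) (hφu : φ u = 0) : φ = 0 := by
  ext v
  obtain ⟨N, hN⟩ := hu.2 v
  obtain ⟨N', hN'⟩ := hu.2 (-v)
  have hle := hφ _ hN
  have hge := hφ _ hN'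
  simp only [map_sub, map_smul, map_neg, hφu, smul_zero] at hle hge
  rw [LinearMap.zero_apply]
  linarith

theorem eq_smul_of_le_extreme_coneState (hu : IsOrderUnitFor M u) {L φ : V →ₗ[ℝ] ℝ}
    (hL : L ∈ (coneStates M u).extremePoints ℝ) (hφ : ∀ m ∈ M, 0 ≤ φ m)
    (hφL : ∀ m ∈ M, φ m ≤ L m) : φ = φ u • L := by
  have hLu : L u = 1 := hL.1.2
  have hψ : ∀ m ∈ M, 0 ≤ (L - φ) m := fun m hm => by simpa using hφL m hm
  rcases (hφ u hu.1).eq_or_lt with h0 | h0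
  · rw [← h0, zero_smul]
    exact eq_zero_of_nonneg_of_orderUnit_eq_zero hu hφ h0.symm
  rcases (hφL u hu.1).eq_or_lt with h1 | h1
  · have := eq_zero_of_nonneg_of_orderUnit_eq_zero hu hψ (by simp [h1])
    rw [h1, hLu, one_smul, ← sub_eq_zero.1 this]
  rw [hLu] at h1
  have hφ' : (φ u)⁻¹ • φ ∈ coneStates M u :=
    ⟨fun m hm => mul_nonneg (inv_nonneg.2 h0.le) (hφ m hm), inv_mul_cancel₀ h0.ne'⟩
  have hψ' : (1 - φ u)⁻¹ • (L - φ) ∈ coneStates M u :=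
    ⟨fun m hm => mul_nonneg (inv_nonneg.2 (sub_pos.2 h1).le) (hψ m hm), by
      simp [hLu, (sub_pos.2 h1).ne']⟩
  have hseg : L ∈ openSegment ℝ ((φ u)⁻¹ • φ) ((1 - φ u)⁻¹ • (L - φ)) :=
    ⟨φ u, 1 - φ u, h0, sub_pos.2 h1, by ring, by
      rw [smul_inv_smul₀ h0.ne', smul_inv_smul₀ (sub_pos.2 h1).ne', add_sub_cancel]⟩
  rw [← hL.2 hφ' hψ' hseg, smul_inv_smul₀ h0.ne']

end PositiveFunctionals

section PureStates

theorem le_mul_of_logConvex_of_le_mul_pow {a : ℕ → ℝ} (ha : ∀ j, 0 ≤ a j)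
    (hconv : ∀ j, a (j + 1) ^ 2 ≤ a j * a (j + 2)) {R N : ℝ} (hR : 0 < R)
    (hgrowth : ∀ j, a j ≤ N * R ^ j) : a 1 ≤ R * a 0 := by
  by_contra! hlt
  have ha0 : 0 < a 0 := (ha 0).lt_of_ne fun h0 => by
    have := hconv 0
    rw [← h0, zero_mul] at this
    rw [← h0, mul_zero] at hlt
    exact (pow_pos hlt 2).not_ge this
  set r := a 1 / a 0
  have hRr : R < r := (lt_div_iff₀ ha0).2 hlt
  have hr0 : 0 < r := hR.trans hRr
  have hratio : ∀ j, 0 < a j ∧ r * a j ≤ a (j + 1) := by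
    intro j
    induction j with
    | zero => exact ⟨ha0, (div_mul_cancel₀ _ ha0.ne').le⟩
    | succ j ih =>
      refine ⟨(mul_pos hr0 ih.1).trans_le ih.2, le_of_mul_le_mul_left ?_ ih.1⟩
      calc a j * (r * a (j + 1)) = r * a j * a (j + 1) := by ring
        _ ≤ a (j + 1) * a (j + 1) := mul_le_mul_of_nonneg_right ih.2 (ha _)
        _ = a (j + 1) ^ 2 := (sq _).symm
        _ ≤ a j * a (j + 2) := hconv j
  have hgeom : ∀ j, a 0 * r ^ j ≤ a j := by
    intro j
    induction j with
    | zero => simp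
    | succ j ih =>
      calc a 0 * r ^ (j + 1) = r * (a 0 * r ^ j) := by ring
        _ ≤ r * a j := mul_le_mul_of_nonneg_left ih hr0.le
        _ ≤ a (j + 1) := (hratio j).2
  obtain ⟨j, hj⟩ := pow_unbounded_of_one_lt (N / a 0) ((one_lt_div hR).2 hRr)
  rw [div_pow, div_lt_div_iff₀ ha0 (pow_pos hR j)] at hj
  linarith [(hgeom j).trans (hgrowth j), mul_comm (r ^ j) (a 0)]

variable {A V : Type*} [CommRing A] [Algebra ℝ A] [AddCommGroup V] [Module ℝ V] [Module A V]
  [IsScalarTower ℝ A V] {M : PointedCone ℝ V} {u : V}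

theorem algebraMap_add_smul_apply (φ : V →ₗ[ℝ] ℝ) (r : ℝ) (a : A) (v : V) :
    φ ((algebraMap ℝ A r + a) • v) = r * φ v + φ (a • v) := by
  rw [add_smul, algebraMap_smul, map_add, map_smul, smul_eq_mul]

theorem smul_mul_sq_le {φ : V →ₗ[ℝ] ℝ} {m : V} (hφ : ∀ a : A, 0 ≤ φ (a ^ 2 • m)) (a b : A) :
    φ ((a * b) • m) ^ 2 ≤ φ (a ^ 2 • m) * φ (b ^ 2 • m) := by
  let ψ : A →ₗ[ℝ] ℝ := φ ∘ₗ (LinearMap.toSpanSingleton A V m).restrictScalars ℝ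
  let B : LinearMap.BilinForm ℝ A := (LinearMap.mul ℝ A).compr₂ ψ
  have hB : LinearMap.IsSymm B := ⟨fun x y => by simp [B, mul_comm]⟩
  simpa [B, ψ, sq] using B.apply_sq_le_of_symm (fun x => by simpa [B, ψ, sq] using hφ x) hB a b

theorem state_pow_smul_unit_le (hsq : ∀ (a : A), ∀ m ∈ M, a ^ 2 • m ∈ M)
    {L : V →ₗ[ℝ] ℝ} (hL : L ∈ coneStates M u) {R : ℝ} (hR : 0 ≤ R)
    {y : A} (hy : (algebraMap ℝ A R - y ^ 2) • u ∈ M) (j : ℕ) :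
    L ((y ^ j) ^ 2 • u) ≤ R ^ j := by
  induction j with
  | zero => simp [hL.2]
  | succ j ih =>
    have hstep := hL.1 _ (hsq (y ^ j) _ hy)
    rw [smul_comm, sub_eq_add_neg, algebraMap_add_smul_apply, smul_smul] at hstep
    have hpow : -y ^ 2 * (y ^ j) ^ 2 = -(y ^ (j + 1)) ^ 2 := by ring
    rw [hpow, neg_smul, map_neg] at hstep
    calc L ((y ^ (j + 1)) ^ 2 • u) ≤ R * L ((y ^ j) ^ 2 • u) := by linarith
      _ ≤ R * R ^ j := mul_le_mul_of_nonneg_left ih hR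
      _ = R ^ (j + 1) := by ring

/-- The sequence `L (y ^ (2 * j) • m)` is log-convex and grows at most like `R ^ j`. -/
theorem state_sq_smul_le (hsq : ∀ (a : A), ∀ m ∈ M, a ^ 2 • m ∈ M)
    (hu : IsOrderUnitFor M u) {L : V →ₗ[ℝ] ℝ} (hL : L ∈ coneStates M u) {R : ℝ} (hR : 0 < R)
    {y : A} (hy : (algebraMap ℝ A R - y ^ 2) • u ∈ M) {m : V} (hm : m ∈ M) :
    L (y ^ 2 • m) ≤ R * L m := by
  obtain ⟨N, hN⟩ := hu.2 m
  have hnonneg : ∀ x ∈ M, ∀ a : A, 0 ≤ L (a ^ 2 • x) := fun x hx a => hL.1 _ (hsq a x hx)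
  have hconv : ∀ j, L ((y ^ (j + 1)) ^ 2 • m) ^ 2 ≤
      L ((y ^ j) ^ 2 • m) * L ((y ^ (j + 2)) ^ 2 • m) := fun j => by
    convert smul_mul_sq_le (hnonneg m hm) (y ^ j) (y ^ (j + 2)) using 4
    ring
  have hgrowth : ∀ j, L ((y ^ j) ^ 2 • m) ≤ |N| * R ^ j := fun j => by
    have hdom := hnonneg _ hN (y ^ j)
    rw [smul_sub, smul_comm _ N, map_sub, map_smul, smul_eq_mul] at hdom
    calc L ((y ^ j) ^ 2 • m) ≤ N * L ((y ^ j) ^ 2 • u) := by linarith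
      _ ≤ |N| * L ((y ^ j) ^ 2 • u) :=
        mul_le_mul_of_nonneg_right (le_abs_self N) (hnonneg u hu.1 _)
      _ ≤ |N| * R ^ j :=
        mul_le_mul_of_nonneg_left (state_pow_smul_unit_le hsq hL hR.le hy j) (abs_nonneg N)
  simpa using le_mul_of_logConvex_of_le_mul_pow (fun j => hnonneg m hm (y ^ j)) hconv hR hgrowth

theorem state_add_smul_nonneg (hsq : ∀ (a : A), ∀ m ∈ M, a ^ 2 • m ∈ M)
    (hu : IsOrderUnitFor M u) {L : V →ₗ[ℝ] ℝ} (hL : L ∈ coneStates M u) {ρ : ℝ} (hρ : 0 < ρ) {y : A}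
    (hy : (algebraMap ℝ A (ρ ^ 2) - y ^ 2) • u ∈ M) {m : V} (hm : m ∈ M) :
    0 ≤ L ((algebraMap ℝ A ρ + y) • m) := by
  have hsquare : 0 ≤ L ((algebraMap ℝ A ρ + y) ^ 2 • m) := hL.1 _ (hsq _ m hm)
  have hexpand : (algebraMap ℝ A ρ + y) ^ 2 =
      algebraMap ℝ A (ρ ^ 2) + (algebraMap ℝ A (2 * ρ) * y + y ^ 2) := by
    simp only [map_pow, map_mul, map_ofNat]
    ring
  rw [hexpand, algebraMap_add_smul_apply, add_smul, map_add, mul_smul, algebraMap_smul, map_smul,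
    smul_eq_mul] at hsquare
  have hbound := state_sq_smul_le hsq hu hL (pow_pos hρ 2) hy hm
  rw [algebraMap_add_smul_apply]
  refine nonneg_of_mul_nonneg_right (a := 2 * ρ) ?_ (by positivity)
  linarith

/-- `(ρ + y) • L` and `(ρ - y) • L` are nonnegative for large `ρ` and add up to `2 * ρ * L`. -/
theorem extreme_state_smul (hsq : ∀ (a : A), ∀ m ∈ M, a ^ 2 • m ∈ M)
    (hu : IsOrderUnitFor M u)
    (hbdd : ∀ y : A, ∃ R : ℝ, (algebraMap ℝ A R - y ^ 2) • u ∈ M)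
    {L : V →ₗ[ℝ] ℝ} (hL : L ∈ (coneStates M u).extremePoints ℝ) (y : A) (v : V) :
    L (y • v) = L (y • u) * L v := by
  obtain ⟨R, hR⟩ := hbdd y
  set ρ := |R| + 1
  have hρ : 0 < ρ := by positivity
  have hRρ : R ≤ ρ ^ 2 := by nlinarith [le_abs_self R, abs_nonneg R]
  have hρM : (algebraMap ℝ A (ρ ^ 2) - y ^ 2) • u ∈ M := by
    convert M.add_mem hR (M.smul_mem (sub_nonneg.2 hRρ) hu.1) using 1
    rw [← algebraMap_smul A (ρ ^ 2 - R) u, ← add_smul, map_sub]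
    ring_nf
  have hplus := fun m hm => state_add_smul_nonneg hsq hu hL.1 hρ hρM (m := m) hm
  have hminus := fun m hm =>
    state_add_smul_nonneg hsq hu hL.1 hρ (y := -y) (by rwa [neg_sq]) (m := m) hm
  let φ : V →ₗ[ℝ] ℝ := (2 * ρ)⁻¹ • L ∘ₗ
    (LinearMap.lsmul A V (algebraMap ℝ A ρ + y)).restrictScalars ℝ
  have hφ : ∀ v, φ v = (2 * ρ)⁻¹ * (ρ * L v + L (y • v)) := fun v => by
    rw [← algebraMap_add_smul_apply]
    rfl
  have heq := eq_smul_of_le_extreme_coneState hu hL (φ := φ)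
    (fun m hm => mul_nonneg (by positivity) (hplus m hm)) fun m hm => by
      have := hminus m hm
      rw [algebraMap_add_smul_apply, neg_smul, map_neg] at this
      rw [hφ, inv_mul_le_iff₀ (by positivity)]
      linarith
  have hv := LinearMap.congr_fun heq v
  rw [hφ, LinearMap.smul_apply, hφ, hL.1.2, smul_eq_mul, mul_assoc] at hv
  linarith [mul_left_cancel₀ (by positivity) hv]

theorem sub_smul_mem_of_forall_multiplicative_pos
    (hsq : ∀ (a : A), ∀ m ∈ M, a ^ 2 • m ∈ M) (hu : IsOrderUnitFor M u)
    (hbdd : ∀ y : A, ∃ R : ℝ, (algebraMap ℝ A R - y ^ 2) • u ∈ M) {g : V}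
    (hg : ∀ L ∈ coneStates M u, ∀ χ : A →ₐ[ℝ] ℝ, (∀ a v, L (a • v) = χ a * L v) → 0 < L g) :
    ∃ ε : ℝ, 0 < ε ∧ g - ε • u ∈ M := by
  refine sub_smul_mem_of_forall_extreme_pos hu fun L hL => ?_
  have hmul := extreme_state_smul hsq hu hbdd hL
  let χ : A →ₐ[ℝ] ℝ := AlgHom.ofLinearMap
    (L ∘ₗ (LinearMap.toSpanSingleton A V u).restrictScalars ℝ) (by simpa using hL.1.2)
    fun a b => by simpa [mul_smul] using hmul a (b • u)
  exact hg L hL.1 χ fun a v => hmul a v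

end PureStates

section ConicDuality

variable {W U : Type*} [AddCommGroup W] [Module ℝ W] [AddCommGroup U] [Module ℝ U]

/-- The cone in `W × ℝ` spanned by `P × 0`, the graph `(T θ, -β θ)` over `θ ∈ Θ` and the ray
through `(-f, v)`. For `v` the optimal value of maximizing `β θ` over `θ ∈ Θ` with `f - T θ ∈ P`,
a functional nonnegative on it and equal to `1` at `(0, 1)` is a dual optimal solution. -/
def dualityCone (P : PointedCone ℝ W) (Θ : PointedCone ℝ U) (T : U →ₗ[ℝ] W) (β : U →ₗ[ℝ] ℝ)
    (f : W) (v : ℝ) : PointedCone ℝ (W × ℝ) :=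
  (P.map (LinearMap.inl ℝ W ℝ) ⊔ Θ.map (T.prod (-β))) ⊔ PointedCone.hull ℝ {(-f, v)}

variable {P : PointedCone ℝ W} {Θ : PointedCone ℝ U} {T : U →ₗ[ℝ] W} {β : U →ₗ[ℝ] ℝ} {f : W}

theorem mem_dualityCone {v : ℝ} {x : W × ℝ} :
    x ∈ dualityCone P Θ T β f v ↔
      ∃ p ∈ P, ∃ θ ∈ Θ, ∃ τ : ℝ, 0 ≤ τ ∧ x = (p + T θ - τ • f, τ * v - β θ) := by
  simp only [dualityCone, Submodule.mem_sup, PointedCone.mem_map]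
  constructor
  · rintro ⟨_, ⟨_, ⟨p, hp, rfl⟩, _, ⟨θ, hθ, rfl⟩, rfl⟩, y, hy, rfl⟩
    obtain ⟨⟨τ, hτ⟩, rfl⟩ := Submodule.mem_span_singleton.1 hy
    refine ⟨p, hp, θ, hθ, τ, hτ, ?_⟩
    change (p, (0 : ℝ)) + (T θ, -β θ) + τ • (-f, v) = _
    ext
    · simp [sub_eq_add_neg]
    · simp only [Prod.snd_add, Prod.smul_snd, smul_eq_mul]
      ring
  · rintro ⟨p, hp, θ, hθ, τ, hτ, rfl⟩
    refine ⟨_, ⟨_, ⟨p, hp, rfl⟩, _, ⟨θ, hθ, rfl⟩, rfl⟩, τ • (-f, v),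
      PointedCone.smul_mem _ hτ (Submodule.mem_span_singleton_self _), ?_⟩
    ext
    · simp [sub_eq_add_neg]
    · change (0 : ℝ) + -β θ + τ * v = τ * v - β θ
      ring

theorem neg_unit_notMem_dualityCone {θs : U} (hθs : θs ∈ Θ) (hfeas : f - T θs ∈ P)
    (hmax : ∀ θ ∈ Θ, f - T θ ∈ P → β θ ≤ β θs) :
    -((0, 1) : W × ℝ) ∉ dualityCone P Θ T β f (β θs) := by
  rw [mem_dualityCone]
  rintro ⟨p, hp, θ, hθ, τ, hτ, hx⟩
  simp only [Prod.neg_mk, Prod.mk.injEq, neg_zero] at hx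
  obtain ⟨hfst, hsnd⟩ := hx
  have hp_eq : p = τ • f - T θ := by
    rw [eq_sub_iff_add_eq, ← sub_eq_zero, ← hfst]
  rcases hτ.lt_or_eq with hτpos | rfl
  · have hscaled := hmax (τ⁻¹ • θ) (Θ.smul_mem (inv_nonneg.2 hτ) hθ) (by
      have := P.smul_mem (inv_nonneg.2 hτ) hp
      rwa [hp_eq, smul_sub, inv_smul_smul₀ hτpos.ne', ← map_smul] at this)
    rw [map_smul, smul_eq_mul, inv_mul_le_iff₀ hτpos] at hscaled
    linarith
  · have hshifted := hmax (θs + θ) (Θ.add_mem hθs hθ) (by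
      have := P.add_mem hfeas hp
      rwa [hp_eq, zero_smul, zero_sub, ← sub_eq_add_neg, sub_sub, ← map_add] at this)
    rw [map_add] at hshifted
    linarith

theorem exists_dual_functional {θs : U} (hθs : θs ∈ Θ) (hfeas : f - T θs ∈ P)
    (hmax : ∀ θ ∈ Θ, f - T θ ∈ P → β θ ≤ β θs) {θ₀ : U} (hθ₀ : θ₀ ∈ Θ)
    (hslater : ∀ q, ∃ t : ℝ, 0 ≤ t ∧ t • (f - T θ₀) + q ∈ P) :
    ∃ Λ : W →ₗ[ℝ] ℝ, (∀ p ∈ P, 0 ≤ Λ p) ∧ (∀ θ ∈ Θ, β θ ≤ Λ (T θ)) ∧ Λ f ≤ β θs := by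
  obtain ⟨g, hg, hg1⟩ := exists_nonneg_functional_eq_one
    (neg_unit_notMem_dualityCone hθs hfeas hmax) fun ⟨q, r⟩ => by
      obtain ⟨t, ht, hq⟩ := hslater q
      refine ⟨t * β θs - t * β θ₀ - r,
        mem_dualityCone.2 ⟨_, hq, t • θ₀, Θ.smul_mem ht hθ₀, t, ht, ?_⟩⟩
      ext
      · simp only [Prod.smul_fst, Prod.fst_add, map_smul]
        module
      · simp
  have hsplit : ∀ q r, g (q, r) = g (q, 0) + r := fun q r => by
    have : ((q, r) : W × ℝ) = (q, 0) + r • (0, 1) := by simp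
    rw [this, map_add, map_smul, hg1, smul_eq_mul, mul_one]
  refine ⟨g ∘ₗ LinearMap.inl ℝ W ℝ, fun p hp => ?_, fun θ hθ => ?_, ?_⟩
  · exact hg (p, 0) (mem_dualityCone.2 ⟨p, hp, 0, Θ.zero_mem, 0, le_rfl, by simp⟩)
  · have := hg (T θ, -β θ) (mem_dualityCone.2 ⟨0, P.zero_mem, θ, hθ, 0, le_rfl, by simp⟩)
    rw [hsplit] at this
    simpa using this
  · have := hg (-f, β θs)
      (mem_dualityCone.2 ⟨0, P.zero_mem, 0, Θ.zero_mem, 1, zero_le_one, by simp⟩)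
    rw [hsplit, ← neg_zero, ← Prod.neg_mk, map_neg] at this
    simpa using this

end ConicDuality

section QuadraticModule

variable {n : ℕ} {E I : Finset ℕ} {c : ℕ → RPoly n}

/-- The quadratic module `Ideal(c_eq) + QM(c_in)`, generated as a convex cone. -/
noncomputable def quadModule (E I : Finset ℕ) (c : ℕ → RPoly n) : PointedCone ℝ (RPoly n) :=
  PointedCone.hull ℝ ({q | ∃ p, q = p ^ 2} ∪
    ({q | ∃ j ∈ I, ∃ p, q = c j * p ^ 2} ∪ {q | ∃ j ∈ E, ∃ p, q = c j * p}))

theorem sq_mem_quadModule (p : RPoly n) : p ^ 2 ∈ quadModule E I c :=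
  Submodule.subset_span (.inl ⟨p, rfl⟩)

theorem ineq_mul_sq_mem_quadModule {j : ℕ} (hj : j ∈ I) (p : RPoly n) :
    c j * p ^ 2 ∈ quadModule E I c :=
  Submodule.subset_span (.inr (.inl ⟨j, hj, p, rfl⟩))

theorem eq_mul_mem_quadModule {j : ℕ} (hj : j ∈ E) (p : RPoly n) : c j * p ∈ quadModule E I c :=
  Submodule.subset_span (.inr (.inr ⟨j, hj, p, rfl⟩))

@[elab_as_elim]
theorem quadModule_induction {motive : (p : RPoly n) → p ∈ quadModule E I c → Prop}
    (sq : ∀ p, motive (p ^ 2) (sq_mem_quadModule p))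
    (ineq : ∀ j (hj : j ∈ I) p, motive (c j * p ^ 2) (ineq_mul_sq_mem_quadModule hj p))
    (eq : ∀ j (hj : j ∈ E) p, motive (c j * p) (eq_mul_mem_quadModule hj p))
    (add : ∀ p q hp hq, motive p hp → motive q hq → motive (p + q) (Submodule.add_mem _ hp hq))
    (smul : ∀ (r : ℝ) (hr : 0 ≤ r) p hp, motive p hp →
      motive (r • p) (PointedCone.smul_mem _ hr hp))
    {p : RPoly n} (hp : p ∈ quadModule E I c) : motive p hp := by
  refine Submodule.span_induction ?_ ?_ add (fun r p hp => smul r r.2 p hp) hp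
  · rintro _ (⟨p, rfl⟩ | ⟨j, hj, p, rfl⟩ | ⟨j, hj, p, rfl⟩)
    exacts [sq p, ineq j hj p, eq j hj p]
  · simpa using sq 0

theorem sq_mul_mem_quadModule (q : RPoly n) {p : RPoly n} (hp : p ∈ quadModule E I c) :
    q ^ 2 * p ∈ quadModule E I c := by
  induction hp using quadModule_induction with
  | sq p => exact mul_pow q p 2 ▸ sq_mem_quadModule (q * p)
  | ineq j hj p =>
    convert ineq_mul_sq_mem_quadModule hj (q * p) using 1
    ring
  | eq j hj p =>
    convert eq_mul_mem_quadModule hj (q ^ 2 * p) using 1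
    ring
  | add p r _ _ hp hr => exact mul_add (q ^ 2) p r ▸ (quadModule E I c).add_mem hp hr
  | smul r hr p _ hp => exact mul_smul_comm r (q ^ 2) p ▸ (quadModule E I c).smul_mem hr hp

theorem eval_nonneg_of_mem_quadModule {p : RPoly n} (hp : p ∈ quadModule E I c) {x : Fin n → ℝ}
    (hx : x ∈ Kset E I c) : 0 ≤ eval x p := by
  induction hp using quadModule_induction with
  | sq p => exact map_pow (eval x) p 2 ▸ sq_nonneg _
  | ineq j hj p => exact map_mul (eval x) _ _ ▸ mul_nonneg (hx.2 j hj) (by simp [sq_nonneg])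
  | eq j hj p => simp [hx.1 j hj]
  | add p q _ _ hp hq => exact map_add (eval x) p q ▸ add_nonneg hp hq
  | smul r hr p _ hp => exact smul_eval x p r ▸ mul_nonneg hr hp

theorem mul_mem_quadModule_of_isSOS {q : RPoly n} (hq : ∀ p, q * p ^ 2 ∈ quadModule E I c)
    {σ : RPoly n} (hσ : IsSOS σ) : q * σ ∈ quadModule E I c := by
  obtain ⟨L, rfl⟩ := hσ
  induction L with
  | nil => simp
  | cons p L ih =>
    rw [List.map_cons, List.sum_cons, mul_add]
    exact (quadModule E I c).add_mem (hq p) ih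

theorem mem_quadModule_of_mem_idealFull {p : RPoly n} (hp : p ∈ IdealFull E c) :
    p ∈ quadModule E I c := by
  suffices h : ∀ q : RPoly n, q * p ∈ quadModule E I c by simpa using h 1
  refine Submodule.span_induction ?_ (by simp) (fun x y _ _ hx hy q => ?_) (fun r x _ hx q => ?_) hp
  · rintro _ ⟨j, hj, rfl⟩ q
    exact mul_comm (c j) q ▸ eq_mul_mem_quadModule hj q
  · exact mul_add q x y ▸ (quadModule E I c).add_mem (hx q) (hy q)
  · rw [smul_eq_mul, ← mul_assoc]
    exact hx (q * r)

theorem mem_quadModule_of_mem_qModFull {p : RPoly n} (hp : p ∈ QModFull I c) :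
    p ∈ quadModule E I c := by
  obtain ⟨σ₀, σ, hσ₀, hσ, rfl⟩ := hp
  refine (quadModule E I c).add_mem ?_ (Submodule.sum_mem _ fun j hj =>
    mul_mem_quadModule_of_isSOS (ineq_mul_sq_mem_quadModule hj) (hσ j hj))
  simpa using mul_mem_quadModule_of_isSOS (E := E) (I := I) (c := c) (q := 1)
    (by simpa using sq_mem_quadModule) hσ₀

theorem exists_C_sub_X_sq_mem_quadModule (harch : ArchimedeanQM E I c) (i : Fin n) :
    ∃ R : ℝ, 0 ≤ R ∧ C R - X i ^ 2 ∈ quadModule E I c := by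
  obtain ⟨R, hR, p₁, hp₁, p₂, hp₂, heq⟩ := harch
  refine ⟨R, hR.le, ?_⟩
  have hball := (quadModule E I c).add_mem (mem_quadModule_of_mem_idealFull hp₁)
    (mem_quadModule_of_mem_qModFull hp₂)
  convert (quadModule E I c).add_mem hball
    (Submodule.sum_mem _ fun j (_ : j ∈ Finset.univ.erase i) => sq_mem_quadModule (X j)) using 1
  rw [← heq, ← Finset.add_sum_erase _ _ (Finset.mem_univ i)]
  ring

theorem exists_C_sub_sq_mem_quadModule (harch : ArchimedeanQM E I c) (p : RPoly n) :
    ∃ N : ℝ, 0 ≤ N ∧ C N - p ^ 2 ∈ quadModule E I c := by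
  induction p using MvPolynomial.induction_on with
  | C a => exact ⟨a ^ 2, sq_nonneg a, by simp⟩
  | add p q hp hq =>
    obtain ⟨N, hN, hp⟩ := hp
    obtain ⟨N', hN', hq⟩ := hq
    refine ⟨2 * N + 2 * N', by positivity, ?_⟩
    have hsum := (quadModule E I c).smul_mem zero_le_two ((quadModule E I c).add_mem hp hq)
    convert (quadModule E I c).add_mem hsum (sq_mem_quadModule (p - q)) using 1
    simp only [smul_eq_C_mul, C_add, C_mul, map_ofNat]
    ring
  | mul_X p i hp =>
    obtain ⟨N, hN, hp⟩ := hp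
    obtain ⟨R, hR, hX⟩ := exists_C_sub_X_sq_mem_quadModule harch i
    refine ⟨N * R, by positivity, ?_⟩
    convert (quadModule E I c).add_mem ((quadModule E I c).smul_mem hR hp)
      (sq_mul_mem_quadModule p hX) using 1
    simp only [smul_eq_C_mul, C_mul]
    ring

theorem isClosed_Kset : IsClosed (Kset E I c) := by
  simp only [Kset, Set.ofPred_and, Set.ofPred_forall]
  exact (isClosed_biInter fun j _ => isClosed_eq (continuous_eval (c j)) continuous_const).inter
    (isClosed_biInter fun j _ => isClosed_le continuous_const (continuous_eval (c j)))

theorem isCompact_Kset (harch : ArchimedeanQM E I c) : IsCompact (Kset E I c) := by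
  choose R _ hRM using exists_C_sub_X_sq_mem_quadModule harch
  refine (isCompact_Icc (a := fun i => -√(R i)) (b := fun i => √(R i))).of_isClosed_subset
    isClosed_Kset fun x hx => ?_
  have hx_sq : ∀ i, x i ^ 2 ≤ R i := fun i => by
    simpa using eval_nonneg_of_mem_quadModule (hRM i) hx
  exact ⟨fun i => (abs_le.1 (Real.abs_le_sqrt (hx_sq i))).1,
    fun i => (abs_le.1 (Real.abs_le_sqrt (hx_sq i))).2⟩

end QuadraticModule

section MomentRelaxation

variable {n m m1 d : ℕ} {E I : Finset ℕ} {c : ℕ → RPoly n} {K : Set (Fin n → ℝ)}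
  {f : RPoly n} {a : Fin m → RPoly n} {b θs : Fin m → ℝ}

/-- The Riesz functional `p ↦ ⟨p, w⟩` of a sequence of moments. -/
noncomputable def momentFunctional (w : (Fin n →₀ ℕ) → ℝ) : RPoly n →ₗ[ℝ] ℝ :=
  (basisMonomials (Fin n) ℝ).constr ℝ w

theorem momentFunctional_monomial (w : (Fin n →₀ ℕ) → ℝ) (α : Fin n →₀ ℕ) :
    momentFunctional w (monomial α 1) = w α := by
  simpa [momentFunctional] using (basisMonomials (Fin n) ℝ).constr_basis ℝ w α

theorem pairing_eq_momentFunctional (w : (Fin n →₀ ℕ) → ℝ) (p : RPoly n) :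
    pairing p w = momentFunctional w p := by
  conv_rhs => rw [p.as_sum, map_sum]
  refine Finset.sum_congr rfl fun α _ => ?_
  rw [show monomial α (coeff α p) = coeff α p • monomial α 1 by simp [smul_monomial], map_smul,
    momentFunctional_monomial, smul_eq_mul]

theorem momentFunctional_moments (Λ : RPoly n →ₗ[ℝ] ℝ) :
    momentFunctional (fun α => Λ (monomial α 1)) = Λ :=
  (basisMonomials (Fin n) ℝ).ext fun α => by
    simpa using momentFunctional_monomial (fun α => Λ (monomial α 1)) α

theorem eventually_momentFunctional_nonneg {p : RPoly n} (hp : p ∈ quadModule E I c) :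
    ∀ᶠ k in atTop, ∀ w, MomRelaxPSD E c I c k w → 0 ≤ momentFunctional w p := by
  induction hp using quadModule_induction with
  | sq p =>
    filter_upwards [eventually_ge_atTop p.totalDegree] with k hk w hw
    exact pairing_eq_momentFunctional w _ ▸ hw.2.2 p hk
  | ineq j hj p =>
    filter_upwards [eventually_ge_atTop (p.totalDegree + ((c j).totalDegree + 1) / 2)]
      with k hk w hw
    exact pairing_eq_momentFunctional w _ ▸ hw.2.1 j hj p hk
  | eq j hj p =>
    filter_upwards [eventually_ge_atTop (p.totalDegree + (c j).totalDegree)] with k hk w hw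
    exact pairing_eq_momentFunctional w _ ▸ (hw.1 j hj p (by omega)).ge
  | add p q _ _ hp hq =>
    filter_upwards [hp, hq] with k hp hq w hw
    exact map_add (momentFunctional w) p q ▸ add_nonneg (hp w hw) (hq w hw)
  | smul r hr p _ hp =>
    filter_upwards [hp] with k hp w hw
    exact map_smul (momentFunctional w) r p ▸ mul_nonneg hr (hp w hw)

/-- The cone of polynomials nonnegative on `K`, without restriction on the degree. -/
def nonnegCone (K : Set (Fin n → ℝ)) : PointedCone ℝ (RPoly n) where
  carrier := {p | ∀ x ∈ K, 0 ≤ eval x p}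
  add_mem' hp hq x hx := map_add (eval x) _ _ ▸ add_nonneg (hp x hx) (hq x hx)
  zero_mem' x _ := (map_zero (eval x)).ge
  smul_mem' r p hp x hx := (smul_eval x p (r : ℝ)).ge.trans' (mul_nonneg r.2 (hp x hx))

/-- The sign constraints `θ_i ≥ 0` for `m1 ≤ i` of problem (P), with indices starting at `0`. -/
def signCone (m m1 : ℕ) : PointedCone ℝ (Fin m → ℝ) where
  carrier := {θ | ∀ i : Fin m, m1 ≤ (i : ℕ) → 0 ≤ θ i}
  add_mem' hθ hη i hi := add_nonneg (hθ i hi) (hη i hi)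
  zero_mem' _ _ := le_rfl
  smul_mem' r _ hθ i hi := mul_nonneg r.2 (hθ i hi)

theorem momRelaxPSD_moments {Λ : RPoly n →ₗ[ℝ] ℝ} (hΛ : ∀ p ∈ nonnegCone (Kset E I c), 0 ≤ Λ p)
    (k : ℕ) : MomRelaxPSD E c I c k fun α => Λ (monomial α 1) := by
  simp only [MomRelaxPSD, pairing_eq_momentFunctional, momentFunctional_moments]
  refine ⟨fun j hj p _ => le_antisymm ?_ ?_, fun j hj p _ => ?_, fun p _ => ?_⟩
  · rw [← neg_nonneg, ← map_neg]
    exact hΛ _ fun x hx => by simp [hx.1 j hj]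
  · exact hΛ _ fun x hx => by simp [hx.1 j hj]
  · exact hΛ _ fun x hx => by
      rw [map_mul, map_pow]
      exact mul_nonneg (hx.2 j hj) (sq_nonneg _)
  · exact hΛ _ fun x _ => map_pow (eval x) p 2 ▸ sq_nonneg _

theorem sum_C_mul_eq_linearCombination (a : Fin m → RPoly n) (θ : Fin m → ℝ) :
    ∑ i, C (θ i) * a i = Fintype.linearCombination ℝ a θ := by
  simp only [Fintype.linearCombination_apply, smul_eq_C_mul]

theorem sum_mul_eq_linearCombination (b θ : Fin m → ℝ) :
    ∑ i, b i * θ i = Fintype.linearCombination ℝ b θ := by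
  simp only [Fintype.linearCombination_apply, smul_eq_mul, mul_comm]

theorem totalDegree_sub_sum_C_mul_le (hf : f.totalDegree ≤ d) (ha : ∀ i, (a i).totalDegree ≤ d)
    (θ : Fin m → ℝ) : (f - ∑ i, C (θ i) * a i).totalDegree ≤ d :=
  (totalDegree_sub _ _).trans <| max_le hf <| totalDegree_finsetSum_le fun i _ =>
    (totalDegree_mul _ _).trans (by simpa using ha i)

theorem exists_pos_le_eval_of_mem_PdInterior {p : RPoly n} (hp : p ∈ PdInterior d K) :
    ∃ ε : ℝ, 0 < ε ∧ ∀ x ∈ K, ε ≤ eval x p := by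
  obtain ⟨hdeg, ε, hε, hball⟩ := hp
  refine ⟨ε, hε, fun x hx => ?_⟩
  have hshift := hball (p - C ε) ((totalDegree_sub _ _).trans (max_le hdeg (by simp)))
    (fun α => by
      rw [coeff_sub, coeff_C, sub_sub_cancel_left, abs_neg]
      split_ifs
      · exact (abs_of_pos hε).le
      · exact abs_zero.trans_le hε.le) x hx
  rwa [map_sub, eval_C, sub_nonneg] at hshift

theorem exists_smul_add_mem_nonnegCone (hK : IsCompact K) {p : RPoly n} {ε : ℝ} (hε : 0 < ε)
    (hp : ∀ x ∈ K, ε ≤ eval x p) (q : RPoly n) : ∃ t : ℝ, 0 ≤ t ∧ t • p + q ∈ nonnegCone K := by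
  obtain ⟨B, hB⟩ := hK.exists_bound_of_continuousOn (continuous_eval q).continuousOn
  refine ⟨|B| / ε, by positivity, fun x hx => ?_⟩
  have hq : -|B| ≤ eval x q :=
    (neg_le_neg ((hB x hx).trans (le_abs_self B))).trans (neg_abs_le _)
  have hp' : |B| ≤ |B| / ε * eval x p := by
    calc |B| = |B| / ε * ε := (div_mul_cancel₀ _ hε.ne').symm
      _ ≤ |B| / ε * eval x p := by gcongr; exact hp x hx
  rw [map_add, smul_eval]
  linarith

theorem exists_dual_optimal_functional (hK : IsCompact K) (hf : f.totalDegree ≤ d)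
    (ha : ∀ i, (a i).totalDegree ≤ d) (hfeas : PFeas m1 d f a K θs)
    (hmax : ∀ θ, PFeas m1 d f a K θ → ∑ i, b i * θ i ≤ ∑ i, b i * θs i)
    (hslater : ∃ θ : Fin m → ℝ, (∀ i : Fin m, m1 ≤ (i : ℕ) → 0 ≤ θ i) ∧
      f - ∑ i, C (θ i) * a i ∈ PdInterior d K) :
    ∃ Λ : RPoly n →ₗ[ℝ] ℝ, (∀ p ∈ nonnegCone K, 0 ≤ Λ p) ∧
      (∀ i : Fin m, (i : ℕ) < m1 → Λ (a i) = b i) ∧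
      (∀ i : Fin m, m1 ≤ (i : ℕ) → b i ≤ Λ (a i)) ∧ Λ f ≤ ∑ i, b i * θs i := by
  obtain ⟨θ₀, hθ₀, hinterior⟩ := hslater
  obtain ⟨ε, hε, hε_le⟩ := exists_pos_le_eval_of_mem_PdInterior hinterior
  obtain ⟨Λ, hΛ, hΛa, hΛf⟩ := exists_dual_functional (P := nonnegCone K) (Θ := signCone m m1)
    (T := Fintype.linearCombination ℝ a) (β := Fintype.linearCombination ℝ b) (f := f)
    hfeas.1 (sum_C_mul_eq_linearCombination a θs ▸ hfeas.2.2)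
    (fun θ hθ hθP => by
      rw [← sum_C_mul_eq_linearCombination] at hθP
      simpa only [sum_mul_eq_linearCombination] using
        hmax θ ⟨hθ, totalDegree_sub_sum_C_mul_le hf ha θ, hθP⟩)
    hθ₀ (sum_C_mul_eq_linearCombination a θ₀ ▸ exists_smul_add_mem_nonnegCone hK hε hε_le)
  have hΛ_single : ∀ (i : Fin m) (t : ℝ), (m1 ≤ (i : ℕ) → 0 ≤ t) →
      t * b i ≤ t * Λ (a i) := fun i t ht => by
    have := hΛa (Pi.single i t) fun j hj => by
      rcases eq_or_ne j i with rfl | hji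
      · simpa using ht hj
      · simp [hji]
    simpa using this
  refine ⟨Λ, hΛ, fun i hi => le_antisymm ?_ ?_, fun i _ => ?_, ?_⟩
  · simpa using hΛ_single i (-1) fun h => absurd h hi.not_ge
  · simpa using hΛ_single i 1 fun _ => zero_le_one
  · simpa using hΛ_single i 1 fun _ => zero_le_one
  · rwa [sum_mul_eq_linearCombination]

/-- The minimizers of the `k`th moment relaxation. -/
def momRelaxMinimizers (m1 : ℕ) (f : RPoly n) (a : Fin m → RPoly n) (b : Fin m → ℝ)
    (E I : Finset ℕ) (c : ℕ → RPoly n) (k : ℕ) : Set ((Fin n →₀ ℕ) → ℝ) :=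
  {w | GMomFeas m1 a b E c I c k w ∧
    ∀ w', GMomFeas m1 a b E c I c k w' → pairing f w ≤ pairing f w'}

theorem sum_mul_le_momentFunctional {k : ℕ} {w : (Fin n →₀ ℕ) → ℝ}
    (hw : GMomFeas m1 a b E c I c k w) {θ : Fin m → ℝ} (hθ : θ ∈ signCone m m1) :
    ∑ i, b i * θ i ≤ momentFunctional w (∑ i, C (θ i) * a i) := by
  simp only [map_sum, ← smul_eq_C_mul, map_smul, smul_eq_mul]
  refine Finset.sum_le_sum fun i _ => ?_
  rw [mul_comm, ← pairing_eq_momentFunctional]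
  rcases lt_or_ge (i : ℕ) m1 with hi | hi
  · rw [hw.1 i hi]
  · exact mul_le_mul_of_nonneg_left (hw.2.1 i hi) (hθ i hi)

theorem momentFunctional_nonpos_of_mem_momRelaxMinimizers (hK : IsCompact (Kset E I c))
    (hf : f.totalDegree ≤ d) (ha : ∀ i, (a i).totalDegree ≤ d)
    (hfeas : PFeas m1 d f a (Kset E I c) θs)
    (hmax : ∀ θ, PFeas m1 d f a (Kset E I c) θ → ∑ i, b i * θ i ≤ ∑ i, b i * θs i)
    (hslater : ∃ θ : Fin m → ℝ, (∀ i : Fin m, m1 ≤ (i : ℕ) → 0 ≤ θ i) ∧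
      f - ∑ i, C (θ i) * a i ∈ PdInterior d (Kset E I c))
    {k : ℕ} {w : (Fin n →₀ ℕ) → ℝ} (hw : w ∈ momRelaxMinimizers m1 f a b E I c k) :
    momentFunctional w (f - ∑ i, C (θs i) * a i) ≤ 0 := by
  obtain ⟨Λ, hΛ, hΛeq, hΛge, hΛf⟩ := exists_dual_optimal_functional hK hf ha hfeas hmax hslater
  have hmin := hw.2 (fun α => Λ (monomial α 1))
    ⟨by simpa only [pairing_eq_momentFunctional, momentFunctional_moments] using hΛeq,
      by simpa only [pairing_eq_momentFunctional, momentFunctional_moments] using hΛge,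
      momRelaxPSD_moments hΛ k⟩
  simp only [pairing_eq_momentFunctional, momentFunctional_moments] at hmin
  rw [map_sub]
  linarith [sum_mul_le_momentFunctional hw.1 (θ := θs) hfeas.1]

end MomentRelaxation

open scoped Matrix

section NondegenerateMinima

variable {n : ℕ} {z v : Fin n → ℝ} {p q : RPoly n}

/-- The maximal ideal of the polynomials vanishing at `z`. -/
noncomputable abbrev pointIdeal (z : Fin n → ℝ) : Ideal (RPoly n) := RingHom.ker (eval z)

/-- The vector of local coordinates `X i - z i` at `z`. -/
noncomputable def localCoord (z : Fin n → ℝ) : Fin n → RPoly n := fun i => X i - C (z i)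

theorem eval_localCoord (x z : Fin n → ℝ) (i : Fin n) : eval x (localCoord z i) = x i - z i := by
  simp [localCoord]

theorem localCoord_mem_pointIdeal (z : Fin n → ℝ) (i : Fin n) :
    localCoord z i ∈ pointIdeal z := by
  simp [RingHom.mem_ker, eval_localCoord]

theorem span_range_localCoord (z : Fin n → ℝ) :
    Ideal.span (Set.range (localCoord z)) = pointIdeal z := by
  refine le_antisymm (Ideal.span_le.2 (Set.range_subset_iff.2 (localCoord_mem_pointIdeal z)))
    fun p hp => ?_
  suffices h : ∀ p : RPoly n, p - C (eval z p) ∈ Ideal.span (Set.range (localCoord z)) by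
    simpa [RingHom.mem_ker.1 hp] using h p
  intro p
  induction p using MvPolynomial.induction_on with
  | C r => simp
  | add p q hp hq => convert Ideal.add_mem _ hp hq using 1; simp only [map_add]; ring
  | mul_X p i hp =>
    convert Ideal.add_mem _ (Ideal.mul_mem_right (X i) _ hp)
      (Ideal.mul_mem_left _ (C (eval z p)) (Ideal.subset_span ⟨i, rfl⟩)) using 1
    simp only [localCoord, map_mul, eval_X]
    ring

theorem exists_eq_dotProduct_localCoord (hp : p ∈ pointIdeal z) :
    ∃ q : Fin n → RPoly n, p = q ⬝ᵥ localCoord z := by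
  rw [← span_range_localCoord, Ideal.mem_span_range_iff_exists_fun] at hp
  exact hp.imp fun q hq => hq.symm

theorem eval_pderiv_dotProduct_localCoord (q : Fin n → RPoly n) (i : Fin n) :
    eval z (pderiv i (q ⬝ᵥ localCoord z)) = eval z (q i) := by
  simp [dotProduct, localCoord, pderiv_X, Pi.single_apply, apply_ite]

theorem pderiv_pderiv_dotProduct_mulVec_localCoord (r : Matrix (Fin n) (Fin n) (RPoly n))
    (i j : Fin n) :
    eval z (pderiv i (pderiv j (localCoord z ⬝ᵥ r *ᵥ localCoord z))) =
      eval z (r i j) + eval z (r j i) := by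
  simp [dotProduct, Matrix.mulVec, localCoord, pderiv_X, Pi.single_apply,
    Finset.sum_add_distrib, Finset.mul_sum]

/-- The gradient at `z` as a linear map. -/
noncomputable def gradAt (z : Fin n → ℝ) : RPoly n →ₗ[ℝ] (Fin n → ℝ) :=
  LinearMap.pi fun i => (aeval z).toLinearMap ∘ₗ (pderiv i).toLinearMap

/-- The Hessian matrix at `z` as a linear map. -/
noncomputable def hessAt (z : Fin n → ℝ) : RPoly n →ₗ[ℝ] Matrix (Fin n) (Fin n) ℝ :=
  LinearMap.pi fun i => LinearMap.pi fun j =>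
    (aeval z).toLinearMap ∘ₗ (pderiv i).toLinearMap ∘ₗ (pderiv j).toLinearMap

theorem gradAt_apply (p : RPoly n) (i : Fin n) : gradAt z p i = eval z (pderiv i p) := rfl

theorem hessAt_apply (p : RPoly n) (i j : Fin n) :
    hessAt z p i j = eval z (pderiv i (pderiv j p)) := rfl

theorem pderiv_pderiv_comm (i j : Fin n) (p : RPoly n) :
    pderiv i (pderiv j p) = pderiv j (pderiv i p) := by
  induction p using MvPolynomial.induction_on with
  | C r => simp
  | add p q hp hq => simp only [map_add, hp, hq]
  | mul_X p k hp =>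
    have hX : ∀ i j : Fin n, pderiv i (pderiv j (X k : RPoly n)) = 0 := fun i j => by
      rw [pderiv_X, Pi.single_apply]
      split_ifs <;> simp
    simp only [pderiv_mul, map_add, hp, hX]
    ring

theorem isHermitian_hessAt (z : Fin n → ℝ) (p : RPoly n) : (hessAt z p).IsHermitian :=
  Matrix.ext fun i j => congrArg (eval z) (pderiv_pderiv_comm j i p)

theorem gradAt_sq (hp : eval z p = 0) : gradAt z (p ^ 2) = 0 := by
  ext i
  simp [gradAt_apply, hp]

theorem hessAt_sq (hp : eval z p = 0) :
    hessAt z (p ^ 2) = (2 : ℝ) • Matrix.vecMulVec (gradAt z p) (gradAt z p) := by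
  ext i j
  simp only [hessAt_apply, gradAt_apply, pderiv_mul, sq, hp, Matrix.smul_apply,
    Matrix.vecMulVec_apply, map_add, map_mul, smul_eq_mul]
  ring

/-- `p` vanishes at `z` to exactly second order with positive definite Hessian: modulo cubic
terms it is the sum of the squares of a regular system of parameters at `z`. -/
def IsNondegMinAt (z : Fin n → ℝ) (p : RPoly n) : Prop :=
  ∃ l : Fin n → RPoly n, Ideal.span (Set.range l) = pointIdeal z ∧
    p - ∑ i, l i ^ 2 ∈ pointIdeal z ^ 3

theorem IsNondegMinAt.congr (hp : IsNondegMinAt z p) (h : q - p ∈ pointIdeal z ^ 3) :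
    IsNondegMinAt z q := by
  obtain ⟨l, hl, hpl⟩ := hp
  exact ⟨l, hl, by simpa using Ideal.add_mem _ h hpl⟩

theorem dotProduct_mulVec_localCoord_mem {r : Matrix (Fin n) (Fin n) (RPoly n)}
    (hr : ∀ i j, eval z (r i j) = 0) :
    localCoord z ⬝ᵥ r *ᵥ localCoord z ∈ pointIdeal z ^ 3 := by
  refine Ideal.sum_mem _ fun i _ => ?_
  rw [pow_succ', pow_two]
  refine Ideal.mul_mem_mul (localCoord_mem_pointIdeal z i) ?_
  change ∑ j, r i j * localCoord z j ∈ _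
  refine Ideal.sum_mem _ fun j _ => ?_
  exact Ideal.mul_mem_mul (RingHom.mem_ker.2 (hr i j)) (localCoord_mem_pointIdeal z j)

theorem taylor_two_mem (hp : eval z p = 0) (hgrad : gradAt z p = 0) :
    p - localCoord z ⬝ᵥ (((1 / 2 : ℝ) • hessAt z p).map C) *ᵥ localCoord z ∈ pointIdeal z ^ 3 := by
  obtain ⟨q, rfl⟩ := exists_eq_dotProduct_localCoord (RingHom.mem_ker.2 hp)
  have hq : ∀ i, eval z (q i) = 0 := fun i => by
    rw [← eval_pderiv_dotProduct_localCoord, ← gradAt_apply, hgrad, Pi.zero_apply]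
  choose r hr using fun i => exists_eq_dotProduct_localCoord (RingHom.mem_ker.2 (hq i))
  have hq_eq : q ⬝ᵥ localCoord z = localCoord z ⬝ᵥ Matrix.of r *ᵥ localCoord z := by
    rw [dotProduct_comm]
    exact congrArg _ (funext hr)
  have hsymm : localCoord z ⬝ᵥ (Matrix.of r)ᵀ *ᵥ localCoord z =
      localCoord z ⬝ᵥ Matrix.of r *ᵥ localCoord z := by
    rw [Matrix.mulVec_transpose, dotProduct_comm, ← Matrix.dotProduct_mulVec]
  have hhalf : (q ⬝ᵥ localCoord z : RPoly n) = localCoord z ⬝ᵥ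
      ((1 / 2 : ℝ) • (Matrix.of r + (Matrix.of r)ᵀ)) *ᵥ localCoord z := by
    rw [Matrix.smul_mulVec, dotProduct_smul, Matrix.add_mulVec, dotProduct_add, hsymm, hq_eq]
    module
  have hhess : ∀ i j, hessAt z (q ⬝ᵥ localCoord z) i j = eval z (r i j) + eval z (r j i) :=
    fun i j => by
      rw [hessAt_apply, hq_eq, pderiv_pderiv_dotProduct_mulVec_localCoord]
      rfl
  nth_rw 1 [hhalf]
  rw [← dotProduct_sub, ← Matrix.sub_mulVec]
  refine dotProduct_mulVec_localCoord_mem fun i j => ?_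
  simp only [Matrix.sub_apply, Matrix.smul_apply, Matrix.add_apply, Matrix.of_apply,
    Matrix.transpose_apply, Matrix.map_apply, hhess, map_sub, smul_eval, map_add, eval_C,
    smul_eq_mul, sub_self]

open scoped MatrixOrder Matrix.Norms.L2Operator in
theorem isNondegMinAt_of_posDef (hp : eval z p = 0) (hgrad : gradAt z p = 0)
    (hhess : (hessAt z p).PosDef) : IsNondegMinAt z p := by
  have hA : ((1 / 2 : ℝ) • hessAt z p).PosDef := hhess.smul (by norm_num)
  obtain ⟨B, hB⟩ := CStarAlgebra.nonneg_iff_eq_star_mul_self.1 hA.posSemidef.nonneg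
  have hBunit : IsUnit B := by
    have hunit := hA.isUnit
    rw [hB] at hunit
    exact isUnit_of_mul_isUnit_right hunit
  refine ⟨B.map C *ᵥ localCoord z, le_antisymm (Ideal.span_le.2 ?_) ?_, ?_⟩
  · rintro _ ⟨i, rfl⟩
    exact Ideal.sum_mem _ fun j _ => Ideal.mul_mem_left _ _ (localCoord_mem_pointIdeal z j)
  · have hinv : B⁻¹.map C *ᵥ B.map C *ᵥ localCoord z = localCoord z := by
      rw [Matrix.mulVec_mulVec, ← Matrix.map_mul, Matrix.nonsing_inv_mul B
        ((Matrix.isUnit_iff_isUnit_det B).1 hBunit), Matrix.map_one C C_0 C_1, Matrix.one_mulVec]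
    rw [← span_range_localCoord, Ideal.span_le, Set.range_subset_iff]
    intro i
    rw [SetLike.mem_coe, ← congrFun hinv i]
    change ∑ j, B⁻¹.map C i j * (B.map C *ᵥ localCoord z) j ∈ _
    exact Ideal.sum_mem _ fun j _ =>
      Ideal.mul_mem_left _ _ (Ideal.subset_span (Set.mem_range_self j))
  · convert taylor_two_mem hp hgrad using 2
    rw [hB, Matrix.star_eq_conjTranspose, Matrix.map_mul, ← Matrix.mulVec_mulVec,
      Matrix.conjTranspose_eq_transpose_of_trivial, Matrix.transpose_map,
      Matrix.mulVec_transpose, dotProduct_comm, ← Matrix.dotProduct_mulVec]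
    exact Finset.sum_congr rfl fun i _ => sq _

theorem isBigO_eval_sum_sq {l : Fin n → RPoly n} (hp : p ∈ Ideal.span (Set.range l) ^ 2) :
    (fun x => eval x p) =O[𝓝 z] fun x => ∑ i, eval x (l i) ^ 2 := by
  have hcont : ∀ q : RPoly n, (fun x => eval x q) =O[𝓝 z] fun _ => (1 : ℝ) := fun q =>
    (continuous_eval q).continuousAt.isBigO_one ℝ
  rw [sq, Ideal.span_mul_span'] at hp
  induction hp using Submodule.span_induction with
  | mem _ h =>
    obtain ⟨_, ⟨i, rfl⟩, _, ⟨j, rfl⟩, rfl⟩ := h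
    refine Asymptotics.isBigO_of_le _ fun x => ?_
    have hle : ∀ i, eval x (l i) ^ 2 ≤ ∑ i, eval x (l i) ^ 2 := fun i =>
      Finset.single_le_sum (f := fun i => eval x (l i) ^ 2) (fun i _ => sq_nonneg _)
        (Finset.mem_univ i)
    rw [Real.norm_eq_abs, Real.norm_of_nonneg (Finset.sum_nonneg fun i _ => sq_nonneg _), abs_le]
    simp only [map_mul]
    constructor <;> nlinarith [hle i, hle j, sq_nonneg (eval x (l i) + eval x (l j)),
      sq_nonneg (eval x (l i) - eval x (l j))]
  | zero => simpa using Asymptotics.isBigO_zero _ _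
  | add p q _ _ hp hq => simpa using hp.add hq
  | smul r p _ hp => simpa using (hcont r).mul hp

theorem isLittleO_eval_sum_sq {l : Fin n → RPoly n} (hl : Ideal.span (Set.range l) = pointIdeal z)
    (hp : p ∈ pointIdeal z ^ 3) :
    (fun x => eval x p) =o[𝓝 z] fun x => ∑ i, eval x (l i) ^ 2 := by
  rw [pow_succ'] at hp
  induction hp using Submodule.mul_induction_on' with
  | mem_mul_mem a ha b hb =>
    have ha₀ : (fun x => eval x a) =o[𝓝 z] fun _ => (1 : ℝ) := by
      rw [Asymptotics.isLittleO_one_iff, ← RingHom.mem_ker.1 ha]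
      exact (continuous_eval a).continuousAt
    simpa using ha₀.mul_isBigO (isBigO_eval_sum_sq (hl ▸ hb))
  | add p _ q _ hp hq => simpa using hp.add hq

theorem IsNondegMinAt.eventually_pos (hp : IsNondegMinAt z p) : ∀ᶠ x in 𝓝[≠] z, 0 < eval x p := by
  obtain ⟨l, hl, hpl⟩ := hp
  have hsmall := (isLittleO_eval_sum_sq hl hpl).bound one_half_pos
  filter_upwards [nhdsWithin_le_nhds hsmall, self_mem_nhdsWithin] with x hx hxz
  have hnonneg : 0 ≤ ∑ i, eval x (l i) ^ 2 := Finset.sum_nonneg fun i _ => sq_nonneg _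
  have hpos : 0 < ∑ i, eval x (l i) ^ 2 := by
    refine hnonneg.lt_of_ne fun h0 => hxz (funext fun i => ?_)
    have hlx : ∀ i, eval x (l i) = 0 := fun i => pow_eq_zero_iff two_ne_zero |>.1 <|
      (Finset.sum_eq_zero_iff_of_nonneg fun i _ => sq_nonneg _).1 h0.symm i (Finset.mem_univ i)
    have hle : pointIdeal z ≤ pointIdeal x := by
      rw [← hl, Ideal.span_le, Set.range_subset_iff]
      exact hlx
    have := hle (localCoord_mem_pointIdeal z i)
    rwa [RingHom.mem_ker, eval_localCoord, sub_eq_zero] at this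
  rw [Real.norm_eq_abs, Real.norm_of_nonneg hnonneg, abs_le] at hx
  simp only [map_sub, map_sum, map_pow] at hx
  linarith [hx.1]

end NondegenerateMinima

section LocalCertificate

theorem exists_pos_forall_add_mul_pos {X : Type*} [TopologicalSpace X] {S : Set X}
    (hS : IsCompact S) {a b : X → ℝ} (ha : Continuous a) (hb : Continuous b)
    (hb₀ : ∀ x, 0 ≤ b x) (hab : ∀ x ∈ S, b x = 0 → 0 < a x) :
    ∃ κ > 0, ∀ x ∈ S, 0 < a x + κ * b x := by
  obtain ⟨N, hN⟩ := hS.elim_directed_cover (fun N : ℕ => {x | 0 < a x + (N + 1) * b x})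
    (fun N => isOpen_lt continuous_const (by fun_prop))
    (fun x hx => by
      rcases (hb₀ x).eq_or_lt with hbx | hbx
      · exact Set.mem_iUnion.2 ⟨0, by simpa [← hbx] using hab x hx hbx.symm⟩
      · obtain ⟨N, hN⟩ := exists_nat_gt (-a x / b x)
        rw [div_lt_iff₀ hbx] at hN
        exact Set.mem_iUnion.2 ⟨N, show 0 < a x + (N + 1) * b x by linarith⟩)
    (Monotone.directed_le fun N N' hNN' x (hx : 0 < a x + (N + 1) * b x) =>
      hx.trans_le (by gcongr; exact hb₀ x))
  exact ⟨N + 1, by positivity, fun x hx => hN hx⟩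

theorem exists_posDef_add_smul {ι : Type*} [Fintype ι] {A B : Matrix ι ι ℝ} (hA : A.IsHermitian)
    (hB : B.PosSemidef) (hAB : ∀ v ≠ 0, v ⬝ᵥ B *ᵥ v = 0 → 0 < v ⬝ᵥ A *ᵥ v) :
    ∃ κ > 0, (A + (κ : ℝ) • B).PosDef := by
  obtain ⟨κ, hκ, hpos⟩ := exists_pos_forall_add_mul_pos (isCompact_sphere (0 : ι → ℝ) 1)
    (a := fun v => v ⬝ᵥ A *ᵥ v) (b := fun v => v ⬝ᵥ B *ᵥ v) (by fun_prop) (by fun_prop)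
    hB.dotProduct_mulVec_nonneg
    fun v hv => hAB v (ne_zero_of_mem_unit_sphere (⟨v, hv⟩ : Metric.sphere (0 : ι → ℝ) 1))
  refine ⟨κ, hκ, Matrix.PosDef.of_dotProduct_mulVec_pos
    (hA.add (hB.isHermitian.smul (IsSelfAdjoint.all κ))) fun v hv => ?_⟩
  have hunit := hpos (‖v‖⁻¹ • v) (by simp [norm_smul, hv])
  simp only [Matrix.mulVec_smul, smul_dotProduct, dotProduct_smul, smul_eq_mul] at hunit
  have hscale : star v ⬝ᵥ (A + κ • B) *ᵥ v =
      ‖v‖ ^ 2 * (‖v‖⁻¹ * (‖v‖⁻¹ * (v ⬝ᵥ A *ᵥ v)) + κ * (‖v‖⁻¹ * (‖v‖⁻¹ * (v ⬝ᵥ B *ᵥ v)))) := by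
    have := norm_ne_zero_iff.2 hv
    simp only [star_trivial, Matrix.add_mulVec, Matrix.smul_mulVec, dotProduct_add,
      dotProduct_smul, smul_eq_mul]
    field_simp
  rw [hscale]
  exact mul_pos (pow_pos (norm_pos_iff.2 hv) 2) hunit

variable {n : ℕ} {E I : Finset ℕ} {c : ℕ → RPoly n} {z : Fin n → ℝ} {p F : RPoly n}

theorem exists_isNondegMinAt_add_sum_sq {ι : Type*} {s : Finset ι} {g : ι → RPoly n}
    (hg : ∀ j ∈ s, eval z (g j) = 0) (hp : eval z p = 0) (hgrad : gradAt z p = 0)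
    (hhess : ∀ v ≠ 0, (∀ j ∈ s, v ⬝ᵥ gradAt z (g j) = 0) → 0 < v ⬝ᵥ hessAt z p *ᵥ v) :
    ∃ κ > 0, IsNondegMinAt z (p + (κ : ℝ) • ∑ j ∈ s, g j ^ 2) := by
  have hsum : hessAt z (∑ j ∈ s, g j ^ 2) =
      ∑ j ∈ s, (2 : ℝ) • Matrix.vecMulVec (gradAt z (g j)) (gradAt z (g j)) := by
    rw [map_sum]
    exact Finset.sum_congr rfl fun j hj => hessAt_sq (hg j hj)
  have hform : ∀ v, v ⬝ᵥ hessAt z (∑ j ∈ s, g j ^ 2) *ᵥ v =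
      ∑ j ∈ s, 2 * (v ⬝ᵥ gradAt z (g j)) ^ 2 := fun v => by
    rw [hsum, Matrix.sum_mulVec, dotProduct_sum]
    refine Finset.sum_congr rfl fun j _ => ?_
    rw [Matrix.smul_mulVec, Matrix.vecMulVec_mulVec, dotProduct_smul, op_smul_eq_smul,
      dotProduct_smul, dotProduct_comm (gradAt z (g j)) v, smul_eq_mul, smul_eq_mul, sq]
  obtain ⟨κ, hκ, hpos⟩ := exists_posDef_add_smul (isHermitian_hessAt z p)
    (B := hessAt z (∑ j ∈ s, g j ^ 2))
    (Matrix.PosSemidef.of_dotProduct_mulVec_nonneg (isHermitian_hessAt z _) fun v => by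
      rw [star_trivial, hform]
      positivity)
    fun v hv h0 => hhess v hv fun j hj => by
      rw [hform, Finset.sum_eq_zero_iff_of_nonneg fun j _ => by positivity] at h0
      simpa using h0 j hj
  refine ⟨κ, hκ, isNondegMinAt_of_posDef ?_ ?_ (by rwa [map_add, map_smul])⟩
  · rw [map_add, smul_eval, map_sum, hp,
      Finset.sum_eq_zero fun j hj => by rw [map_pow, hg j hj, zero_pow two_ne_zero]]
    simp
  · rw [map_add, map_smul, map_sum, hgrad, Finset.sum_eq_zero fun j hj => gradAt_sq (hg j hj)]
    simp

theorem exists_smul_sub_smul_sq_sub_mul_sq_mem {g : RPoly n} (hg : eval z g = 0) {r : ℝ}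
    (hr : 0 < r) (κ : ℝ) : ∃ ρ, r • g - κ • g ^ 2 - g * ρ ^ 2 ∈ pointIdeal z ^ 3 := by
  -- `ρ` is the square root of `r - κ g` to first order in `g`.
  refine ⟨√r • (1 - (κ / (2 * r)) • g), ?_⟩
  have hcube : r • g - κ • g ^ 2 - g * (√r • (1 - (κ / (2 * r)) • g)) ^ 2 =
      -((κ ^ 2 / (4 * r)) • g ^ 3) := by
    have hκ : κ = 2 * r * (κ / (2 * r)) := by field_simp
    have hκ' : κ ^ 2 / (4 * r) = r * (κ / (2 * r)) ^ 2 := by field_simp; norm_num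
    rw [smul_pow, Real.sq_sqrt hr.le, hκ']
    nth_rw 1 [hκ]
    simp only [smul_eq_C_mul, map_mul, map_pow, map_ofNat]
    ring
  rw [hcube, smul_eq_C_mul]
  exact neg_mem (Ideal.mul_mem_left _ _ (Ideal.pow_mem_pow (RingHom.mem_ker.2 hg) 3))

/-- The Karush–Kuhn–Tucker conditions with strict complementarity and the second order sufficient
condition at `u` for minimizing `F` on `Kset E I c`: these are the conditions `OptCondsAt`
without the constraint qualification. -/
def StrictSecondOrderKKT (E I : Finset ℕ) (c : ℕ → RPoly n) (F : RPoly n) (u : Fin n → ℝ) : Prop :=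
  ∃ lamE lamI : ℕ → ℝ,
    (gradP F u =
      (∑ j ∈ E, lamE j • gradP (c j) u) + ∑ j ∈ I, lamI j • gradP (c j) u) ∧
    (∀ j ∈ I, 0 ≤ lamI j ∧ lamI j * eval u (c j) = 0) ∧
    (∀ j ∈ I, 0 < lamI j + eval u (c j)) ∧
    (∀ v : Fin n → ℝ, v ≠ 0 →
      (∀ j ∈ E, (∑ i, v i * gradP (c j) u i) = 0) →
      (∀ j ∈ I, eval u (c j) = 0 → (∑ i, v i * gradP (c j) u i) = 0) →
      0 < ∑ i, ∑ i', v i *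
        ((hessP F u i i' - ∑ j ∈ E, lamE j * hessP (c j) u i i')
          - ∑ j ∈ I, lamI j * hessP (c j) u i i') * v i')

theorem StrictSecondOrderKKT.exists_lagrangian (h : StrictSecondOrderKKT E I c F z)
    (hz : ∀ j ∈ E, eval z (c j) = 0) (hF : eval z F = 0) :
    ∃ μ lam : ℕ → ℝ, (∀ j ∈ I, eval z (c j) = 0 → 0 < lam j) ∧
      (∀ j ∈ I, eval z (c j) ≠ 0 → lam j = 0) ∧
      eval z (F - ∑ j ∈ E, μ j • c j - ∑ j ∈ I, lam j • c j) = 0 ∧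
      gradAt z (F - ∑ j ∈ E, μ j • c j - ∑ j ∈ I, lam j • c j) = 0 ∧
      ∀ v ≠ 0, (∀ j ∈ E, v ⬝ᵥ gradAt z (c j) = 0) →
        (∀ j ∈ I, eval z (c j) = 0 → v ⬝ᵥ gradAt z (c j) = 0) →
        0 < v ⬝ᵥ hessAt z (F - ∑ j ∈ E, μ j • c j - ∑ j ∈ I, lam j • c j) *ᵥ v := by
  obtain ⟨μ, lam, hgrad, hcomp, hstrict, hhess⟩ := h
  refine ⟨μ, lam, fun j hj hcj => by simpa [hcj] using hstrict j hj,
    fun j hj hcj => (mul_eq_zero.1 (hcomp j hj).2).resolve_right hcj, ?_, ?_,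
    fun v hv hE hI => (hhess v hv hE hI).trans_eq ?_⟩
  · have hE : ∑ j ∈ E, μ j * eval z (c j) = 0 :=
      Finset.sum_eq_zero fun j hj => by rw [hz j hj, mul_zero]
    have hI : ∑ j ∈ I, lam j * eval z (c j) = 0 :=
      Finset.sum_eq_zero fun j hj => (hcomp j hj).2
    simp [smul_eval, hF, hE, hI]
  · change gradAt z F = ∑ j ∈ E, μ j • gradAt z (c j) + ∑ j ∈ I, lam j • gradAt z (c j) at hgrad
    simp only [map_sub, map_sum, map_smul, hgrad]
    abel
  · simp only [map_sub, map_sum, map_smul, dotProduct, Matrix.mulVec, Finset.mul_sum,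
      Matrix.sub_apply, Matrix.sum_apply, Matrix.smul_apply, smul_eq_mul, mul_assoc]
    rfl

open Classical in
theorem StrictSecondOrderKKT.exists_isNondegMinAt_sub (h : StrictSecondOrderKKT E I c F z)
    (hz : z ∈ Kset E I c) (hF : eval z F = 0) :
    ∃ S ∈ quadModule E I c, IsNondegMinAt z (F - S) := by
  obtain ⟨μ, lam, hactive, hinactive, hzero, hgrad, hhess⟩ := h.exists_lagrangian hz.1 hF
  obtain ⟨κ, -, hmin⟩ := exists_isNondegMinAt_add_sum_sq
    (s := E.disjSum {j ∈ I | eval z (c j) = 0}) (g := Sum.elim c c) (z := z)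
    (p := F - ∑ j ∈ E, μ j • c j - ∑ j ∈ I, lam j • c j)
    (by simpa using hz.1) hzero hgrad fun v hv h0 =>
      hhess v hv (fun j hj => h0 (.inl j) (by simpa)) fun j hj hcj =>
        h0 (.inr j) (by simp [hj, hcj])
  have hρ : ∀ j ∈ I, ∃ ρ, lam j • c j - (if eval z (c j) = 0 then κ • c j ^ 2 else 0) -
      c j * ρ ^ 2 ∈ pointIdeal z ^ 3 := fun j hj => by
    split_ifs with hcj
    · exact exists_smul_sub_smul_sq_sub_mul_sq_mem hcj (hactive j hj hcj) κ
    · exact ⟨0, by simp [hinactive j hj hcj]⟩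
  choose! ρ hρ using hρ
  refine ⟨∑ j ∈ I, c j * ρ j ^ 2 + ∑ j ∈ E, c j * (C (μ j) - κ • c j),
    add_mem (sum_mem fun j hj => ineq_mul_sq_mem_quadModule hj _)
      (sum_mem fun j hj => eq_mul_mem_quadModule hj _), hmin.congr ?_⟩
  have hE : ∑ j ∈ E, c j * (C (μ j) - κ • c j) =
      ∑ j ∈ E, μ j • c j - κ • ∑ j ∈ E, c j ^ 2 := by
    rw [Finset.smul_sum, ← Finset.sum_sub_distrib]
    refine Finset.sum_congr rfl fun j _ => ?_
    simp only [smul_eq_C_mul]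
    ring
  convert Ideal.sum_mem _ hρ using 1
  rw [Finset.sum_disjSum, hE]
  simp only [Sum.elim_inl, Sum.elim_inr, Finset.sum_sub_distrib, ← Finset.sum_filter,
    Finset.smul_sum, smul_add]
  abel

end LocalCertificate

section Gluing

variable {n : ℕ} {E I : Finset ℕ} {c : ℕ → RPoly n} {F : RPoly n}

theorem isCoprime_pointIdeal {z z' : Fin n → ℝ} (h : z ≠ z') :
    IsCoprime (pointIdeal z) (pointIdeal z') := by
  obtain ⟨i, hi⟩ := Function.ne_iff.1 h
  have hone : (C (z' i - z i)⁻¹ : RPoly n) * (C (z' i) - C (z i)) = 1 := by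
    rw [← C_sub, ← C_mul, inv_mul_cancel₀ (sub_ne_zero.2 hi.symm), C_1]
  refine Ideal.isCoprime_iff_exists.2
    ⟨C (z' i - z i)⁻¹ * localCoord z i, Ideal.mul_mem_left _ _ (localCoord_mem_pointIdeal z i),
      -(C (z' i - z i)⁻¹ * localCoord z' i),
      neg_mem (Ideal.mul_mem_left _ _ (localCoord_mem_pointIdeal z' i)), ?_⟩
  simp only [localCoord]
  linear_combination hone

theorem exists_forall_sub_mem_pointIdeal_pow (Z : Finset (Fin n → ℝ)) (k : ℕ)
    (p : (Fin n → ℝ) → RPoly n) : ∃ r, ∀ z ∈ Z, r - p z ∈ pointIdeal z ^ k := by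
  obtain ⟨r, hr⟩ := Ideal.exists_forall_sub_mem_ideal (I := fun z : Z => pointIdeal z.1 ^ k)
    (fun z z' h => (isCoprime_pointIdeal (Subtype.coe_ne_coe.2 h)).pow) fun z => p z.1
  exact ⟨r, fun z hz => hr ⟨z, hz⟩⟩

open Classical in
theorem exists_mem_quadModule_forall_sub_mem_pow {Z : Finset (Fin n → ℝ)}
    {S : (Fin n → ℝ) → RPoly n} (hS : ∀ z ∈ Z, S z ∈ quadModule E I c) (k : ℕ) :
    ∃ T ∈ quadModule E I c, ∀ z ∈ Z, T - S z ∈ pointIdeal z ^ k := by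
  choose e he using fun z' =>
    exists_forall_sub_mem_pointIdeal_pow Z k fun z => if z' = z then (1 : RPoly n) else 0
  refine ⟨∑ z ∈ Z, e z ^ 2 * S z, sum_mem fun z hz => sq_mul_mem_quadModule _ (hS z hz),
    fun z hz => ?_⟩
  have hsum : ∑ z' ∈ Z, e z' ^ 2 * S z' - S z =
      ∑ z' ∈ Z, (e z' ^ 2 - (if z' = z then 1 else 0) ^ 2) * S z' := by
    simp [sub_mul, Finset.sum_sub_distrib, ite_pow, hz]
  rw [hsum]
  refine Ideal.sum_mem _ fun z' _ => Ideal.mul_mem_right _ _ ?_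
  rw [sq_sub_sq]
  exact Ideal.mul_mem_left _ _ (he z' z hz)

theorem finite_zeros_of_isNondegMinAt_sub (hK : IsCompact (Kset E I c))
    (hF : ∀ z ∈ Kset E I c, eval z F = 0 → ∃ S ∈ quadModule E I c, IsNondegMinAt z (F - S)) :
    {x ∈ Kset E I c | eval x F = 0}.Finite := by
  have hcompact : IsCompact {x ∈ Kset E I c | eval x F = 0} :=
    hK.inter_right (isClosed_eq (continuous_eval F) continuous_const)
  by_contra hinf
  obtain ⟨z, hz, hacc⟩ := Set.Infinite.exists_accPt_of_subset_isCompact hinf hcompact subset_rfl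
  obtain ⟨S, hS, hmin⟩ := hF z hz.1 hz.2
  obtain ⟨x, ⟨hxK, hxF⟩, hpos⟩ :=
    ((accPt_iff_frequently_nhdsNE.1 hacc).and_eventually hmin.eventually_pos).exists
  rw [map_sub, hxF, zero_sub, neg_pos] at hpos
  exact hpos.not_ge (eval_nonneg_of_mem_quadModule hS hxK)

theorem exists_bump {K : Set (Fin n → ℝ)} (hK : IsCompact K) (Z : Finset (Fin n → ℝ)) (k : ℕ) :
    ∃ ψ : RPoly n, (∀ x ∈ K, eval x ψ ∈ Set.Icc 0 1) ∧ (∀ x ∉ Z, eval x ψ < 1) ∧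
      ∀ z ∈ Z, 1 - ψ ∈ pointIdeal z ^ k := by
  let W : RPoly n := ∏ z ∈ Z, (∑ i, localCoord z i ^ 2) ^ k
  have hW : ∀ x, eval x W = ∏ z ∈ Z, (∑ i, (x i - z i) ^ 2) ^ k := fun x => by
    simp [W, eval_localCoord]
  have hW_nonneg : ∀ x, 0 ≤ eval x W := fun x => by rw [hW]; positivity
  have hW_pos : ∀ x ∉ Z, 0 < eval x W := fun x hx => by
    rw [hW]
    refine Finset.prod_pos fun z hz => pow_pos ?_ k
    obtain ⟨i, hi⟩ := Function.ne_iff.1 (ne_of_mem_of_not_mem hz hx).symm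
    exact Finset.sum_pos' (fun i _ => sq_nonneg _)
      ⟨i, Finset.mem_univ i, sq_pos_iff.2 (sub_ne_zero.2 hi)⟩
  obtain ⟨B, hB⟩ := hK.bddAbove_image (continuous_eval W).continuousOn
  have hB_pos : 0 < max B 1 := by positivity
  refine ⟨1 - C (max B 1)⁻¹ * W, fun x hx => ?_, fun x hx => ?_, fun z hz => ?_⟩
  · have hle : eval x W ≤ max B 1 := (hB ⟨x, hx, rfl⟩).trans (le_max_left _ _)
    rw [map_sub, map_one, map_mul, eval_C, Set.mem_Icc, sub_nonneg, inv_mul_le_one₀ hB_pos]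
    exact ⟨hle, sub_le_self _ (mul_nonneg (inv_nonneg.2 hB_pos.le) (hW_nonneg x))⟩
  · rw [map_sub, map_one, map_mul, eval_C]
    exact sub_lt_self _ (mul_pos (inv_pos.2 hB_pos) (hW_pos x hx))
  · rw [sub_sub_cancel]
    refine Ideal.mul_mem_left _ _ (Ideal.mem_of_dvd _ (Finset.dvd_prod_of_mem _ hz)
      (Ideal.pow_mem_pow (Ideal.sum_mem _ fun i _ => ?_) k))
    exact Ideal.pow_mem_of_mem _ (localCoord_mem_pointIdeal z i) 2 two_pos

theorem eventually_forall_sub_pow_mul_pos {X : Type*} [TopologicalSpace X] {K Z : Set X}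
    (hK : IsCompact K) {f s ψ : X → ℝ} (hf : Continuous f) (hs : Continuous s) (hψ : Continuous ψ)
    (hs₀ : ∀ x ∈ K, 0 ≤ s x) (hψ₀ : ∀ x ∈ K, ψ x ∈ Set.Icc 0 1)
    (hZ : ∀ z ∈ Z, ∀ᶠ x in 𝓝[≠] z, 0 < f x - s x) (hf₀ : ∀ x ∈ K \ Z, 0 < f x)
    (hψ₁ : ∀ x ∈ K \ Z, ψ x < 1) :
    ∀ᶠ N : ℕ in atTop, ∀ x ∈ K \ Z, 0 < f x - ψ x ^ N * s x := by
  suffices h : ∀ᶠ N : ℕ in atTop, ∀ x ∈ K, x ∈ K \ Z → 0 < f x - ψ x ^ N * s x from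
    h.mono fun N hN x hx => hN x hx.1 hx
  have hanti : ∀ x ∈ K, ∀ N N' : ℕ, N ≤ N' → ψ x ^ N' * s x ≤ ψ x ^ N * s x :=
    fun x hx N N' h => mul_le_mul_of_nonneg_right
      (pow_le_pow_of_le_one (hψ₀ x hx).1 (hψ₀ x hx).2 h) (hs₀ x hx)
  refine hK.induction_on (p := fun U => ∀ᶠ N : ℕ in atTop, ∀ x ∈ U, x ∈ K \ Z →
      0 < f x - ψ x ^ N * s x) (by simp) (fun U V hUV hV => hV.mono fun N hN x hx => hN x (hUV hx))
    (fun U V hU hV => (hU.and hV).mono fun N hN x hx => hx.elim (hN.1 x) (hN.2 x)) fun z hz => ?_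
  by_cases hzZ : z ∈ Z
  · refine ⟨_, mem_nhdsWithin_of_mem_nhds (eventually_nhdsWithin_iff.1 (hZ z hzZ)),
      Eventually.of_forall fun N x hx hxKZ => ?_⟩
    have hpos := hx (ne_of_mem_of_not_mem hzZ hxKZ.2).symm
    have hle := hanti x hxKZ.1 0 N N.zero_le
    rw [pow_zero, one_mul] at hle
    linarith
  · have htendsto : Tendsto (fun N => f z - ψ z ^ N * s z) atTop (𝓝 (f z)) := by
      simpa using ((tendsto_pow_atTop_nhds_zero_of_lt_one (hψ₀ z hz).1
        (hψ₁ z ⟨hz, hzZ⟩)).mul_const (s z)).const_sub (f z)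
    obtain ⟨N₀, hN₀⟩ := (htendsto.eventually_const_lt (hf₀ z ⟨hz, hzZ⟩)).exists
    have hcont : Continuous fun x => f x - ψ x ^ N₀ * s x := by fun_prop
    refine ⟨_, mem_nhdsWithin_of_mem_nhds (hcont.continuousAt.eventually_const_lt hN₀),
      (eventually_ge_atTop N₀).mono fun N hN x hx hxKZ => ?_⟩
    exact lt_of_lt_of_le hx (sub_le_sub_left (hanti x hxKZ.1 N₀ N hN) _)

theorem exists_isNondegMinAt_of_sub_mem_quadModule (hK : IsCompact (Kset E I c))
    (hF : ∀ x ∈ Kset E I c, 0 ≤ eval x F) {Z : Finset (Fin n → ℝ)}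
    (hZ : ∀ x ∈ Kset E I c, eval x F = 0 → x ∈ Z)
    (hloc : ∀ z ∈ Z, ∃ S ∈ quadModule E I c, IsNondegMinAt z (F - S)) :
    ∃ G, F - G ∈ quadModule E I c ∧ (∀ z ∈ Z, IsNondegMinAt z G) ∧
      ∀ x ∈ Kset E I c, x ∉ Z → 0 < eval x G := by
  choose! S hS hmin using hloc
  obtain ⟨T, hT, hTS⟩ := exists_mem_quadModule_forall_sub_mem_pow hS 3
  obtain ⟨ψ, hψ₀, hψ₁, hψ⟩ := exists_bump hK Z 3
  have hminT : ∀ N, ∀ z ∈ Z, IsNondegMinAt z (F - ψ ^ N * T) := fun N z hz => by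
    refine (hmin z hz).congr ?_
    have hpow : 1 - ψ ^ N ∈ pointIdeal z ^ 3 := by
      simpa using Ideal.mem_of_dvd _ (sub_dvd_pow_sub_pow 1 ψ N) (hψ z hz)
    convert Ideal.sub_mem _ (Ideal.mul_mem_right T _ hpow) (hTS z hz) using 1
    ring
  obtain ⟨N, hN⟩ := (eventually_forall_sub_pow_mul_pos (Z := (Z : Set (Fin n → ℝ)))
    (ψ := fun x => eval x ψ ^ 2) hK (continuous_eval F)
    (continuous_eval T) ((continuous_eval ψ).pow 2)
    (fun x hx => eval_nonneg_of_mem_quadModule hT hx)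
    (fun x hx => ⟨sq_nonneg _, pow_le_one₀ (hψ₀ x hx).1 (hψ₀ x hx).2⟩)
    (fun z hz => by simpa using (hminT 0 z hz).eventually_pos)
    (fun x hx => (hF x hx.1).lt_of_ne fun h => hx.2 (hZ x hx.1 h.symm))
    (fun x hx => pow_lt_one₀ (hψ₀ x hx.1).1 (hψ₁ x hx.2) two_ne_zero)).exists
  refine ⟨F - (ψ ^ N) ^ 2 * T, ?_, ?_, fun x hx hxZ => ?_⟩
  · rw [sub_sub_cancel]
    exact sq_mul_mem_quadModule _ hT
  · rw [← pow_mul]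
    exact hminT (N * 2)
  · simpa [pow_right_comm] using hN x ⟨hx, hxZ⟩

end Gluing

section PositivityModuloVanishingIdeal

variable {n : ℕ} {E I : Finset ℕ} {c : ℕ → RPoly n} {Z : Finset (Fin n → ℝ)} {x : Fin n → ℝ}
  {J : Ideal (RPoly n)} {L : RPoly n →ₗ[ℝ] ℝ} {G : RPoly n}

/-- The ideal of the polynomials vanishing on the finite set `Z`. -/
noncomputable def vanishIdeal (Z : Finset (Fin n → ℝ)) : Ideal (RPoly n) := ⨅ z ∈ Z, pointIdeal z

theorem mem_vanishIdeal {p : RPoly n} : p ∈ vanishIdeal Z ↔ ∀ z ∈ Z, eval z p = 0 := by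
  simp [vanishIdeal, Submodule.mem_iInf, RingHom.mem_ker]

theorem mem_vanishIdeal_pow {k : ℕ} {p : RPoly n} :
    p ∈ vanishIdeal Z ^ k ↔ ∀ z ∈ Z, p ∈ pointIdeal z ^ k := by
  have hcop : (Z : Set (Fin n → ℝ)).Pairwise (Function.onFun IsCoprime pointIdeal) :=
    fun _ _ _ _ h => isCoprime_pointIdeal h
  have hcop_pow : (Z : Set (Fin n → ℝ)).Pairwise
      (Function.onFun IsCoprime fun z => pointIdeal z ^ k) :=
    fun _ hz _ hz' h => (hcop hz hz' h).pow
  rw [vanishIdeal, ← Ideal.prod_eq_iInf_of_pairwise_isCoprime hcop, ← Finset.prod_pow,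
    Ideal.prod_eq_iInf_of_pairwise_isCoprime hcop_pow]
  simp only [Submodule.mem_iInf]

theorem IsNondegMinAt.mem_sq {z : Fin n → ℝ} (hG : IsNondegMinAt z G) : G ∈ pointIdeal z ^ 2 := by
  obtain ⟨l, hl, hGl⟩ := hG
  rw [← sub_add_cancel G (∑ i, l i ^ 2)]
  exact add_mem (Ideal.pow_le_pow_right (by norm_num) hGl)
    (sum_mem fun i _ => Ideal.pow_mem_pow (hl ▸ Ideal.subset_span ⟨i, rfl⟩) 2)

open Classical in
theorem exists_localizer (Z : Finset (Fin n → ℝ)) (x : Fin n → ℝ) :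
    ∃ e : RPoly n, (x ∈ Z → eval x e = 1) ∧
      ∀ (k : ℕ), ∀ p ∈ pointIdeal x ^ k, e ^ k * p ∈ vanishIdeal Z ^ k := by
  obtain ⟨e, he⟩ := exists_forall_sub_mem_pointIdeal_pow Z 1 fun z => if z = x then 1 else 0
  refine ⟨e, fun hx => ?_, fun k p hp => mem_vanishIdeal_pow.2 fun z hz => ?_⟩
  · simpa [RingHom.mem_ker, sub_eq_zero] using he x hx
  · rcases eq_or_ne z x with rfl | hne
    · exact Ideal.mul_mem_left _ _ hp
    · exact Ideal.mul_mem_right _ _ (Ideal.pow_mem_pow (by simpa [hne] using he z hz) k)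

/-- A functional nonnegative on the part of the quadratic module inside `J ^ 2` which, as a
functional on the `RPoly n`-module `J ^ 2`, is multiplicative over evaluation at `x`. Its values
outside `J ^ 2` are irrelevant. -/
structure IsPointState (E I : Finset ℕ) (c : ℕ → RPoly n) (J : Ideal (RPoly n)) (x : Fin n → ℝ)
    (L : RPoly n →ₗ[ℝ] ℝ) : Prop where
  nonneg : ∀ p ∈ J ^ 2, p ∈ quadModule E I c → 0 ≤ L p
  map_mul : ∀ q, ∀ p ∈ J ^ 2, L (q * p) = eval x q * L p

namespace IsPointState

theorem sq_nonneg (hL : IsPointState E I c J x L) {a : RPoly n} (ha : a ∈ J) : 0 ≤ L (a ^ 2) :=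
  hL.nonneg _ (Ideal.pow_mem_pow ha 2) (sq_mem_quadModule a)

theorem mem_Kset (hL : IsPointState E I c J x L) {a : RPoly n} (ha : a ∈ J) (hpos : 0 < L (a ^ 2)) :
    x ∈ Kset E I c := by
  have ha₂ : a ^ 2 ∈ J ^ 2 := Ideal.pow_mem_pow ha 2
  have heval : ∀ q, q * a ^ 2 ∈ quadModule E I c → 0 ≤ eval x q := fun q hq =>
    nonneg_of_mul_nonneg_left
      (hL.map_mul q _ ha₂ ▸ hL.nonneg _ (Ideal.mul_mem_left _ q ha₂) hq) hpos
  refine ⟨fun j hj => le_antisymm ?_ ?_, fun j hj => heval _ (ineq_mul_sq_mem_quadModule hj a)⟩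
  · have hneg : -c j * a ^ 2 ∈ quadModule E I c := by
      convert eq_mul_mem_quadModule hj (-a ^ 2) using 1
      ring
    simpa using heval _ hneg
  · exact heval _ (eq_mul_mem_quadModule hj _)

theorem map_sq_eq_zero_of_mem_span (hL : IsPointState E I c J x L) {ι : Type*} {y : ι → RPoly n}
    (hy : ∀ i, y i ∈ J) (hzero : ∀ i, L (y i ^ 2) = 0) {b : RPoly n}
    (hb : b ∈ Ideal.span (Set.range y)) : L (b ^ 2) = 0 := by
  have hspan : Ideal.span (Set.range y) ≤ J := Ideal.span_le.2 (Set.range_subset_iff.2 hy)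
  induction hb using Submodule.span_induction with
  | mem _ h =>
    obtain ⟨i, rfl⟩ := h
    exact hzero i
  | zero => simp
  | add a b ha hb iha ihb =>
    have hadd : L ((a + b) ^ 2) + L ((a - b) ^ 2) = 2 * L (a ^ 2) + 2 * L (b ^ 2) := by
      rw [← map_add, show (a + b) ^ 2 + (a - b) ^ 2 = a ^ 2 + a ^ 2 + (b ^ 2 + b ^ 2) by ring]
      simp only [map_add]
      ring
    have hsum := hL.sq_nonneg (hspan (add_mem ha hb))
    have hdiff := hL.sq_nonneg (hspan (sub_mem ha hb))
    linarith
  | smul q a ha iha =>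
    rw [smul_eq_mul, mul_pow, hL.map_mul _ _ (Ideal.pow_mem_pow (hspan ha) 2), iha, mul_zero]

theorem map_pos_of_eval_pos (hL : IsPointState E I c J x L) {a : RPoly n} (ha : a ∈ J)
    (hpos : 0 < L (a ^ 2)) (hG : G ∈ J ^ 2) (hGx : 0 < eval x G) : 0 < L G := by
  have hswap : eval x G * L (a ^ 2) = eval x a ^ 2 * L G := by
    rw [← hL.map_mul _ _ (Ideal.pow_mem_pow ha 2), ← map_pow, ← hL.map_mul _ _ hG, mul_comm]
  exact pos_of_mul_pos_right (hswap ▸ mul_pos hGx hpos) (by positivity)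

theorem map_pos_of_isNondegMinAt (hL : IsPointState E I c (vanishIdeal Z) x L) {a : RPoly n}
    (ha : a ∈ vanishIdeal Z) (hpos : 0 < L (a ^ 2)) (hG : G ∈ vanishIdeal Z ^ 2) (hx : x ∈ Z)
    (hGx : IsNondegMinAt x G) : 0 < L G := by
  obtain ⟨e, hex, he⟩ := exists_localizer Z x
  obtain ⟨l, hl, hGl⟩ := hGx
  have hlocal : ∀ p ∈ vanishIdeal Z ^ 2, L (e ^ 2 * p) = L p := fun p hp => by
    rw [hL.map_mul _ _ hp, map_pow, hex hx, one_pow, one_mul]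
  have hcubic : ∀ p ∈ pointIdeal x ^ 3, L (e ^ 2 * p) = 0 := fun p hp => by
    rw [pow_succ'] at hp
    induction hp using Submodule.mul_induction_on' with
    | mem_mul_mem q hq b hb =>
      rw [mul_left_comm, hL.map_mul _ _ (he 2 b hb), RingHom.mem_ker.1 hq, zero_mul]
    | add p _ q _ ihp ihq => rw [mul_add, map_add, ihp, ihq, add_zero]
  have hel : ∀ i, e * l i ∈ vanishIdeal Z := fun i => by
    simpa using he 1 (l i) (by rw [pow_one, ← hl]; exact Ideal.subset_span ⟨i, rfl⟩)
  have hLG : L G = ∑ i, L ((e * l i) ^ 2) := by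
    rw [← hlocal G hG, ← sub_add_cancel G (∑ i, l i ^ 2), mul_add, map_add, hcubic _ hGl, zero_add,
      Finset.mul_sum, map_sum]
    simp only [mul_pow]
  have hnonneg : ∀ i ∈ Finset.univ, 0 ≤ L ((e * l i) ^ 2) := fun i _ => hL.sq_nonneg (hel i)
  rw [hLG]
  -- If the sum vanished, `L` would kill the square of `e * a`, a combination of the `e * l i`.
  refine (Finset.sum_nonneg hnonneg).lt_of_ne' fun hzero => hpos.ne' ?_
  obtain ⟨q, hq⟩ := Ideal.mem_span_range_iff_exists_fun.1
    (hl.symm ▸ RingHom.mem_ker.2 (mem_vanishIdeal.1 ha x hx) : a ∈ Ideal.span (Set.range l))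
  have hea : e * a ∈ Ideal.span (Set.range fun i => e * l i) :=
    Ideal.mem_span_range_iff_exists_fun.2 ⟨q, by simp only [← hq, Finset.mul_sum, mul_left_comm e]⟩
  rw [← hlocal _ (Ideal.pow_mem_pow ha 2), ← mul_pow]
  exact hL.map_sq_eq_zero_of_mem_span hel
    (fun i => (Finset.sum_eq_zero_iff_of_nonneg hnonneg).1 hzero i (Finset.mem_univ i)) hea

theorem map_pos (hL : IsPointState E I c (vanishIdeal Z) x L) {a : RPoly n}
    (ha : a ∈ vanishIdeal Z) (hpos : 0 < L (a ^ 2)) (hmin : ∀ z ∈ Z, IsNondegMinAt z G)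
    (hG : ∀ y ∈ Kset E I c, y ∉ Z → 0 < eval y G) : 0 < L G := by
  have hGsq : G ∈ vanishIdeal Z ^ 2 := mem_vanishIdeal_pow.2 fun z hz => (hmin z hz).mem_sq
  by_cases hx : x ∈ Z
  · exact hL.map_pos_of_isNondegMinAt ha hpos hGsq hx (hmin x hx)
  · exact hL.map_pos_of_eval_pos ha hpos hGsq (hG x (hL.mem_Kset ha hpos) hx)

end IsPointState

theorem exists_smul_sum_sq_sub_sq_mem_quadModule (harch : ArchimedeanQM E I c) {ι : Type*}
    [Fintype ι] {s : ι → RPoly n} {a : RPoly n} (ha : a ∈ Ideal.span (Set.range s)) :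
    ∃ N : ℝ, 0 ≤ N ∧ N • ∑ i, s i ^ 2 - a ^ 2 ∈ quadModule E I c := by
  classical
  induction ha using Submodule.span_induction with
  | mem _ h =>
    obtain ⟨i, rfl⟩ := h
    refine ⟨1, zero_le_one, ?_⟩
    rw [one_smul, ← Finset.add_sum_erase _ _ (Finset.mem_univ i), add_sub_cancel_left]
    exact sum_mem fun j _ => sq_mem_quadModule _
  | zero => exact ⟨0, le_rfl, by simp⟩
  | add a b _ _ iha ihb =>
    obtain ⟨N, hN, ha⟩ := iha
    obtain ⟨N', hN', hb⟩ := ihb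
    refine ⟨2 * (N + N'), by positivity, ?_⟩
    convert add_mem ((quadModule E I c).smul_mem (r := 2) (by norm_num) (add_mem ha hb))
      (sq_mem_quadModule (a - b)) using 1
    rw [mul_smul, add_smul]
    simp only [ofNat_smul_eq_nsmul ℝ 2]
    ring
  | smul q a _ iha =>
    obtain ⟨N, hN, ha⟩ := iha
    obtain ⟨N', hN', hq⟩ := exists_C_sub_sq_mem_quadModule harch q
    refine ⟨N' * N, by positivity, ?_⟩
    convert add_mem ((quadModule E I c).smul_mem hN' ha) (sq_mul_mem_quadModule a hq) using 1
    simp only [smul_eq_C_mul, C_mul, smul_eq_mul]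
    ring

theorem exists_smul_sum_sq_sub_mem_quadModule (harch : ArchimedeanQM E I c) {ι : Type*}
    [Fintype ι] {s : ι → RPoly n} {p : RPoly n} (hp : p ∈ Ideal.span (Set.range s) ^ 2) :
    ∃ N : ℝ, N • ∑ i, s i ^ 2 - p ∈ quadModule E I c := by
  rw [pow_two] at hp
  induction hp using Submodule.mul_induction_on' with
  | mem_mul_mem a ha b hb =>
    obtain ⟨N, -, ha⟩ := exists_smul_sum_sq_sub_sq_mem_quadModule harch ha
    obtain ⟨N', -, hb⟩ := exists_smul_sum_sq_sub_sq_mem_quadModule harch hb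
    refine ⟨2⁻¹ * (N + N'), ?_⟩
    -- `a * b = (a ^ 2 + b ^ 2 - (a - b) ^ 2) / 2`
    convert (quadModule E I c).smul_mem (r := 2⁻¹) (by norm_num)
      (add_mem (add_mem ha hb) (sq_mem_quadModule (a - b))) using 1
    rw [mul_smul, add_smul, eq_inv_smul_iff₀ two_ne_zero, smul_sub, smul_inv_smul₀ two_ne_zero,
      ofNat_smul_eq_nsmul ℝ 2]
    ring
  | add p _ q _ ihp ihq =>
    obtain ⟨N, hp⟩ := ihp
    obtain ⟨N', hq⟩ := ihq
    refine ⟨N + N', ?_⟩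
    convert add_mem hp hq using 1
    rw [add_smul]
    abel

theorem exists_isPointState_eq (L : ↥(J ^ 2) →ₗ[ℝ] ℝ)
    (hL : ∀ v : ↥(J ^ 2), (v : RPoly n) ∈ quadModule E I c → 0 ≤ L v) (χ : RPoly n →ₐ[ℝ] ℝ)
    (hχ : ∀ (q : RPoly n) (v : ↥(J ^ 2)), L (q • v) = χ q * L v) :
    ∃ x L', IsPointState E I c J x L' ∧ ∀ v : ↥(J ^ 2), L' v = L v := by
  obtain ⟨L', hL'⟩ := LinearMap.exists_extend (p := (J ^ 2).restrictScalars ℝ) L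
  have hext : ∀ v : ↥(J ^ 2), L' v = L v := LinearMap.congr_fun hL'
  have hχ_eval : ∀ q, χ q = eval (fun i => χ (X i)) q := fun q => by
    rw [← coe_aeval_eq_eval, RingHom.coe_coe, ← comp_aeval_apply, aeval_X_left_apply]
  refine ⟨fun i => χ (X i), L', ⟨fun p hp hpM => ?_, fun q p hp => ?_⟩, hext⟩
  · rw [hext ⟨p, hp⟩]
    exact hL ⟨p, hp⟩ hpM
  · rw [← hχ_eval, hext ⟨p, hp⟩, ← hχ]
    exact hext (q • ⟨p, hp⟩)

theorem exists_sub_smul_sum_sq_mem_quadModule (harch : ArchimedeanQM E I c) {ι : Type*}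
    [Fintype ι] {s : ι → RPoly n} (hs : Ideal.span (Set.range s) = vanishIdeal Z)
    (hmin : ∀ z ∈ Z, IsNondegMinAt z G) (hG : ∀ y ∈ Kset E I c, y ∉ Z → 0 < eval y G) :
    ∃ ε : ℝ, 0 < ε ∧ G - ε • ∑ i, s i ^ 2 ∈ quadModule E I c := by
  have hsJ : ∀ i, s i ∈ vanishIdeal Z := fun i => hs ▸ Ideal.subset_span ⟨i, rfl⟩
  let V : Ideal (RPoly n) := vanishIdeal Z ^ 2
  let M : PointedCone ℝ V := (quadModule E I c).comap (V.subtype.restrictScalars ℝ)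
  let u : V := ⟨∑ i, s i ^ 2, sum_mem fun i _ => Ideal.pow_mem_pow (hsJ i) 2⟩
  let g : V := ⟨G, mem_vanishIdeal_pow.2 fun z hz => (hmin z hz).mem_sq⟩
  have hu : IsOrderUnitFor M u := ⟨sum_mem fun i _ => sq_mem_quadModule (s i), fun v =>
    exists_smul_sum_sq_sub_mem_quadModule harch (s := s) (hs ▸ v.2)⟩
  have hbdd : ∀ y : RPoly n, ∃ R : ℝ, (algebraMap ℝ (RPoly n) R - y ^ 2) • u ∈ M := fun y => by
    obtain ⟨R, -, hR⟩ := exists_C_sub_sq_mem_quadModule harch y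
    refine ⟨R, ?_⟩
    change (C R - y ^ 2) * ∑ i, s i ^ 2 ∈ quadModule E I c
    rw [mul_comm, Finset.sum_mul]
    exact sum_mem fun i _ => sq_mul_mem_quadModule (s i) hR
  refine sub_smul_mem_of_forall_multiplicative_pos (M := M) (u := u) (g := g)
    (fun a m hm => sq_mul_mem_quadModule a hm) hu hbdd fun L hL χ hχ => ?_
  obtain ⟨x, L', hstate, hext⟩ := exists_isPointState_eq L (fun v hv => hL.1 v hv) χ hχ
  obtain ⟨i, -, hi⟩ : ∃ i ∈ Finset.univ, 0 < L' (s i ^ 2) := by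
    refine Finset.exists_lt_of_sum_lt ?_
    rw [Finset.sum_const_zero, ← map_sum]
    exact zero_lt_one.trans_eq ((hext u).trans hL.2).symm
  exact hext g ▸ hstate.map_pos (hsJ i) hi hmin hG

theorem exists_vanishIdeal_certificate (harch : ArchimedeanQM E I c) {F : RPoly n}
    (hF : ∀ x ∈ Kset E I c, 0 ≤ eval x F)
    (hkkt : ∀ z ∈ Kset E I c, eval z F = 0 → StrictSecondOrderKKT E I c F z) :
    ∃ (Z : Finset (Fin n → ℝ)) (r : ℕ) (s : Fin r → RPoly n) (ε : ℝ), 0 < ε ∧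
      Ideal.span (Set.range s) = vanishIdeal Z ∧ F - ε • ∑ i, s i ^ 2 ∈ quadModule E I c := by
  have hK := isCompact_Kset harch
  have hloc : ∀ z ∈ Kset E I c, eval z F = 0 → ∃ S ∈ quadModule E I c, IsNondegMinAt z (F - S) :=
    fun z hz hz₀ => (hkkt z hz hz₀).exists_isNondegMinAt_sub hz hz₀
  have hfin := finite_zeros_of_isNondegMinAt_sub hK hloc
  obtain ⟨G, hFG, hmin, hG⟩ := exists_isNondegMinAt_of_sub_mem_quadModule hK hF
    (Z := hfin.toFinset) (fun x hx hx₀ => hfin.mem_toFinset.2 ⟨hx, hx₀⟩)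
    fun z hz => hloc z (hfin.mem_toFinset.1 hz).1 (hfin.mem_toFinset.1 hz).2
  obtain ⟨r, s, hs⟩ := Submodule.fg_iff_exists_fin_generating_family.1
    (IsNoetherian.noetherian (vanishIdeal hfin.toFinset))
  obtain ⟨ε, hε, hGs⟩ := exists_sub_smul_sum_sq_mem_quadModule harch hs hmin hG
  exact ⟨hfin.toFinset, r, s, ε, hε, hs, by simpa using add_mem hFG hGs⟩

end PositivityModuloVanishingIdeal

section FlatTruncation

variable {n : ℕ} {E I : Finset ℕ} {c : ℕ → RPoly n} {k : ℕ} {w : (Fin n →₀ ℕ) → ℝ}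
  {𝒲 : ℕ → Set ((Fin n →₀ ℕ) → ℝ)}

theorem momentFunctional_sq_nonneg (hw : MomRelaxPSD E c I c k w) {p : RPoly n}
    (hp : p.totalDegree ≤ k) : 0 ≤ momentFunctional w (p ^ 2) :=
  pairing_eq_momentFunctional w (p ^ 2) ▸ hw.2.2 p hp

theorem momentFunctional_mul_eq_zero (hw : MomRelaxPSD E c I c k w) {s q : RPoly n}
    (hs : s.totalDegree ≤ k) (hq : q.totalDegree ≤ k) (hzero : momentFunctional w (s ^ 2) = 0) :
    momentFunctional w (q * s) = 0 := by
  have hquad : ∀ t : ℝ, 0 ≤ 0 * (t * t) + 2 * momentFunctional w (q * s) * t +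
      momentFunctional w (q ^ 2) := fun t => by
    have hnonneg := momentFunctional_sq_nonneg hw ((totalDegree_add q (t • s)).trans
      (max_le hq ((totalDegree_smul_le t s).trans hs)))
    have hexpand : (q + t • s) ^ 2 = q ^ 2 + (2 * t) • (q * s) + t ^ 2 • s ^ 2 := by
      simp only [smul_eq_C_mul, C_mul, C_pow, map_ofNat]
      ring
    rw [hexpand, map_add, map_add, map_smul, map_smul, hzero, smul_zero, smul_eq_mul] at hnonneg
    linarith
  have hdiscrim := discrim_le_zero hquad
  rw [discrim] at hdiscrim
  nlinarith [sq_nonneg (momentFunctional w (q * s))]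

theorem eventually_momentFunctional_eq_zero_of_mem_span
    (h𝒲 : ∀ k, ∀ w ∈ 𝒲 k, MomRelaxPSD E c I c k w) {ι : Type*} [Finite ι] {s : ι → RPoly n}
    (hs : ∀ i, ∀ᶠ k in atTop, ∀ w ∈ 𝒲 k, momentFunctional w (s i ^ 2) = 0) {p : RPoly n}
    (hp : p ∈ Ideal.span (Set.range s)) :
    ∀ᶠ k in atTop, ∀ w ∈ 𝒲 k, momentFunctional w p = 0 := by
  cases nonempty_fintype ι
  obtain ⟨q, rfl⟩ := Ideal.mem_span_range_iff_exists_fun.1 hp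
  have hterm : ∀ i, ∀ᶠ k in atTop, ∀ w ∈ 𝒲 k, momentFunctional w (q i * s i) = 0 := fun i => by
    filter_upwards [hs i, eventually_ge_atTop (s i).totalDegree,
      eventually_ge_atTop (q i).totalDegree] with k hzero hsk hqk w hw
    exact momentFunctional_mul_eq_zero (h𝒲 k w hw) hsk hqk (hzero w hw)
  filter_upwards [eventually_all.2 hterm] with k hk w hw
  rw [map_sum]
  exact Finset.sum_eq_zero fun i _ => hk i w hw

theorem eventually_momentFunctional_sq_eq_zero (h𝒲 : ∀ k, ∀ w ∈ 𝒲 k, MomRelaxPSD E c I c k w)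
    {F : RPoly n} (hF : ∀ k, ∀ w ∈ 𝒲 k, momentFunctional w F ≤ 0) {ι : Type*} [Fintype ι]
    {s : ι → RPoly n} {ε : ℝ} (hε : 0 < ε) (hcert : F - ε • ∑ i, s i ^ 2 ∈ quadModule E I c)
    (i : ι) : ∀ᶠ k in atTop, ∀ w ∈ 𝒲 k, momentFunctional w (s i ^ 2) = 0 := by
  filter_upwards [eventually_momentFunctional_nonneg hcert,
    eventually_all.2 fun j => eventually_ge_atTop (s j).totalDegree] with k hk hdeg w hw
  have hnonneg : ∀ j ∈ Finset.univ, 0 ≤ momentFunctional w (s j ^ 2) := fun j _ =>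
    momentFunctional_sq_nonneg (h𝒲 k w hw) (hdeg j)
  have hsum : ε * ∑ j, momentFunctional w (s j ^ 2) ≤ 0 := by
    have hle := hk w (h𝒲 k w hw)
    rw [map_sub, map_smul, map_sum, smul_eq_mul, sub_nonneg] at hle
    exact hle.trans (hF k w hw)
  exact (Finset.sum_eq_zero_iff_of_nonneg hnonneg).1
    ((nonpos_of_mul_nonpos_right hsum hε).antisymm (Finset.sum_nonneg hnonneg)) i
    (Finset.mem_univ i)

theorem mdeg_le_totalDegree {p : RPoly n} {α : Fin n →₀ ℕ} (hα : α ∈ p.support) :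
    mdeg α ≤ p.totalDegree := by
  rw [mdeg, ← Finsupp.sum_fintype α (fun _ e => e) fun _ => rfl]
  exact le_totalDegree hα

theorem sum_coeff_smul_monomial_eq {p : RPoly n} {t : ℕ} (hp : p.totalDegree ≤ t) :
    ∑ α : {α : Fin n →₀ ℕ // mdeg α ≤ t}, p.coeff α.1 • monomial α.1 (1 : ℝ) = p := by
  classical
  ext γ
  simp only [coeff_sum, coeff_smul, coeff_monomial, smul_eq_mul, mul_ite, mul_one, mul_zero]
  by_cases hγ : mdeg γ ≤ t
  · rw [Finset.sum_eq_single ⟨γ, hγ⟩ (fun α _ hα => if_neg fun h => hα (Subtype.ext h)) (by simp)]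
    exact if_pos rfl
  · have hcoeff : p.coeff γ = 0 :=
      notMem_support_iff.1 fun h => hγ ((mdeg_le_totalDegree h).trans hp)
    rw [hcoeff]
    refine Finset.sum_eq_zero fun α _ => if_neg ?_
    rintro rfl
    exact hγ α.2

theorem momentFunctional_mul {t : ℕ} {p q : RPoly n} (hp : p.totalDegree ≤ t)
    (hq : q.totalDegree ≤ t) :
    momentFunctional w (p * q) =
      (fun α : {α : Fin n →₀ ℕ // mdeg α ≤ t} => p.coeff α.1) ⬝ᵥ
        momentMatrix t w *ᵥ fun α => q.coeff α.1 := by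
  conv_lhs =>
    rw [← sum_coeff_smul_monomial_eq hp, ← sum_coeff_smul_monomial_eq hq, Finset.sum_mul_sum]
  simp only [smul_mul_smul_comm, monomial_mul, one_mul, map_sum, map_smul,
    momentFunctional_monomial, smul_eq_mul, dotProduct, Matrix.mulVec, momentMatrix,
    Finset.mul_sum]
  exact Finset.sum_congr rfl fun α _ => Finset.sum_congr rfl fun β _ => by ring

theorem rank_momentMatrix_eq_of_reduction {t t' : ℕ} (htt' : t' ≤ t)
    {N : (Fin n →₀ ℕ) → RPoly n} (hN : ∀ α, (N α).totalDegree ≤ t')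
    (hw : ∀ α β, mdeg α ≤ t → mdeg β ≤ t → w (α + β) = momentFunctional w (N α * N β)) :
    (momentMatrix t' w).rank = (momentMatrix t w).rank := by
  refine le_antisymm ?_ ?_
  · let ι : {α : Fin n →₀ ℕ // mdeg α ≤ t'} → {α : Fin n →₀ ℕ // mdeg α ≤ t} :=
      fun α => ⟨α.1, α.2.trans htt'⟩
    exact Matrix.rank_submatrix_le (momentMatrix t w) ι ι
  · let B : Matrix {α : Fin n →₀ ℕ // mdeg α ≤ t'} {α : Fin n →₀ ℕ // mdeg α ≤ t} ℝ :=
      Matrix.of fun β α => (N α.1).coeff β.1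
    have hfactor : momentMatrix t w = Bᵀ * (momentMatrix t' w * B) := by
      ext α β
      exact (hw _ _ α.2 β.2).trans (momentFunctional_mul (hN _) (hN _))
    rw [hfactor]
    exact (Matrix.rank_mul_le_right _ _).trans (Matrix.rank_mul_le_left _ _)

open Classical in
theorem exists_interpolation_operator (Z : Finset (Fin n → ℝ)) :
    ∃ (N : RPoly n → RPoly n) (D : ℕ), ∀ p, p - N p ∈ vanishIdeal Z ∧ (N p).totalDegree ≤ D := by
  choose e he using fun z' =>
    exists_forall_sub_mem_pointIdeal_pow Z 1 fun z => if z' = z then (1 : RPoly n) else 0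
  have heval : ∀ z', ∀ z ∈ Z, eval z (e z') = if z' = z then 1 else 0 := fun z' z hz => by
    have h := he z' z hz
    rw [pow_one, RingHom.mem_ker, map_sub, sub_eq_zero] at h
    rw [h, apply_ite (eval z), map_one, map_zero]
  refine ⟨fun p => ∑ z ∈ Z, eval z p • e z, Z.sup fun z => (e z).totalDegree, fun p =>
    ⟨mem_vanishIdeal.2 fun z hz => ?_, totalDegree_finsetSum_le fun z hz =>
      (totalDegree_smul_le _ _).trans (Finset.le_sup (f := fun z => (e z).totalDegree) hz)⟩⟩
  simp [smul_eval, heval _ z hz, hz]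

theorem eventually_hasFlatTruncation {Z : Finset (Fin n → ℝ)}
    (h𝒲 : ∀ p ∈ vanishIdeal Z, ∀ᶠ k in atTop, ∀ w ∈ 𝒲 k, momentFunctional w p = 0) (d₀ dK : ℕ) :
    ∀ᶠ k in atTop, ∀ w ∈ 𝒲 k, HasFlatTruncation d₀ dK k w := by
  obtain ⟨N, D, hN⟩ := exists_interpolation_operator Z
  let t := d₀ + dK + D
  have hmem : ∀ α β : Fin n →₀ ℕ, monomial (α + β) (1 : ℝ) -
      N (monomial α 1) * N (monomial β 1) ∈ vanishIdeal Z := fun α β => by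
    rw [← one_mul (1 : ℝ), ← monomial_mul, one_mul]
    convert add_mem (Ideal.mul_mem_right (monomial β 1) _ (hN (monomial α 1)).1)
      (Ideal.mul_mem_left _ (N (monomial α 1)) (hN (monomial β 1)).1) using 1
    ring
  have hzero : ∀ᶠ k in atTop, ∀ α β : {α : Fin n →₀ ℕ // mdeg α ≤ t}, ∀ w ∈ 𝒲 k,
      momentFunctional w (monomial (α.1 + β.1) 1 - N (monomial α.1 1) * N (monomial β.1 1)) = 0 :=
    eventually_all.2 fun α => eventually_all.2 fun β => h𝒲 _ (hmem α.1 β.1)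
  filter_upwards [hzero, eventually_ge_atTop t] with k hk htk w hw
  refine ⟨t, by omega, htk, rank_momentMatrix_eq_of_reduction (N := fun α => N (monomial α 1))
    (by omega) (fun α => (hN _).2.trans (by omega)) fun α β hα hβ => ?_⟩
  rw [← momentFunctional_monomial w, ← sub_eq_zero, ← map_sub]
  exact hk ⟨α, hα⟩ ⟨β, hβ⟩ w hw

end FlatTruncation

theorem statement_1_general {n m m1 d : ℕ} {f : RPoly n} {a : Fin m → RPoly n} {b : Fin m → ℝ}
    {E I : Finset ℕ} {c : ℕ → RPoly n} (hf : f.totalDegree ≤ d) (ha : ∀ i, (a i).totalDegree ≤ d)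
    (harch : ArchimedeanQM E I c) {θs : Fin m → ℝ} (hfeas : PFeas m1 d f a (Kset E I c) θs)
    (hmax : ∀ θ, PFeas m1 d f a (Kset E I c) θ → ∑ i, b i * θ i ≤ ∑ i, b i * θs i)
    (hslater : ∃ θ : Fin m → ℝ, (∀ i : Fin m, m1 ≤ (i : ℕ) → 0 ≤ θ i) ∧
      f - ∑ i, C (θ i) * a i ∈ PdInterior d (Kset E I c))
    (hkkt : ∀ u, (u ∈ Kset E I c ∧ ∀ x ∈ Kset E I c,
        eval u (f - ∑ i, C (θs i) * a i) ≤ eval x (f - ∑ i, C (θs i) * a i)) →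
      StrictSecondOrderKKT E I c (f - ∑ i, C (θs i) * a i) u) :
    ∀ᶠ k in atTop, ∀ w ∈ momRelaxMinimizers m1 f a b E I c k,
      HasFlatTruncation (d0GMP f a E I c) (dKOrig E I c) k w := by
  obtain ⟨Z, r, s, ε, hε, hs, hcert⟩ := exists_vanishIdeal_certificate harch hfeas.2.2
    fun z hz hz₀ => hkkt z ⟨hz, fun x hx => hz₀.trans_le (hfeas.2.2 x hx)⟩
  have hPSD : ∀ k, ∀ w ∈ momRelaxMinimizers m1 f a b E I c k, MomRelaxPSD E c I c k w :=
    fun k w hw => hw.1.2.2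
  have hnonpos : ∀ k, ∀ w ∈ momRelaxMinimizers m1 f a b E I c k,
      momentFunctional w (f - ∑ i, C (θs i) * a i) ≤ 0 := fun k w hw =>
    momentFunctional_nonpos_of_mem_momRelaxMinimizers (isCompact_Kset harch) hf ha hfeas hmax
      hslater hw
  have hsq := eventually_momentFunctional_sq_eq_zero hPSD hnonpos hε hcert
  exact eventually_hasFlatTruncation
    (fun p hp => eventually_momentFunctional_eq_zero_of_mem_span hPSD hsq (hs ▸ hp)) _ _

/-- Theorem 3.2(ii): under archimedeanness, Assumption A, and the
optimality conditions at every global minimizer of (Q), for all sufficiently large `k`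
every minimizer of the `k`th moment relaxation has a flat truncation. -/
theorem statement_1
    (n m m1 d : ℕ) (hm1 : m1 ≤ m)
    (f : RPoly n) (a : Fin m → RPoly n) (b : Fin m → ℝ)
    (E I : Finset ℕ) (hEI : Disjoint E I) (c : ℕ → RPoly n)
    (hf : f.totalDegree ≤ d) (ha : ∀ i, (a i).totalDegree ≤ d)
    -- archimedeanness of Ideal(c_eq) + QM(c_in)
    (harch : ArchimedeanQM E I c)
    -- Assumption A: θ* is a maximizer of (P)
    (θs : Fin m → ℝ) (hθfeas : PFeas m1 d f a (Kset E I c) θs)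
    (hθmax : ∀ θ : Fin m → ℝ, PFeas m1 d f a (Kset E I c) θ →
      (∑ i, b i * θ i) ≤ ∑ i, b i * θs i)
    -- Assumption A: (M) has a minimizer y* ≠ 0
    (ys : (Fin n →₀ ℕ) → ℝ) (hyfeas : MFeas m1 d a b (Kset E I c) ys)
    (hymin : ∀ y : (Fin n →₀ ℕ) → ℝ, MFeas m1 d a b (Kset E I c) y →
      pairing f ys ≤ pairing f y)
    (hynz : ∃ α : Fin n →₀ ℕ, mdeg α ≤ d ∧ ys α ≠ 0)
    -- Assumption A: Slater condition for (P)
    (hslater : ∃ θ : Fin m → ℝ, (∀ i : Fin m, m1 ≤ (i : ℕ) → 0 ≤ θ i) ∧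
      (f - ∑ i, C (θ i) * a i) ∈ PdInterior d (Kset E I c))
    -- LICQC, SCC, SOSC at every global minimizer of (Q)
    (hopt : ∀ u : Fin n → ℝ,
      (u ∈ Kset E I c ∧ ∀ x ∈ Kset E I c,
        eval u (f - ∑ i, C (θs i) * a i) ≤ eval x (f - ∑ i, C (θs i) * a i)) →
      OptCondsAt E c I c (f - ∑ i, C (θs i) * a i) u) :
    ∃ k1 : ℕ, ∀ k : ℕ, k1 ≤ k →
      ∀ w : (Fin n →₀ ℕ) → ℝ,
        GMomFeas m1 a b E c I c k w →
        (∀ w' : (Fin n →₀ ℕ) → ℝ, GMomFeas m1 a b E c I c k w' →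
          pairing f w ≤ pairing f w') →
        HasFlatTruncation (d0GMP f a E I c) (dKOrig E I c) k w := by
  obtain ⟨k1, hk1⟩ := eventually_atTop.1
    (statement_1_general hf ha harch hθfeas hθmax hslater fun u hu => (hopt u hu).2)
  exact ⟨k1, fun k hk w hw hmin => hk1 k hk w ⟨hw, hmin⟩⟩
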